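/- The number of isomorphism classes of maximal almost rigid representations of Q equals the Catalan number (1/(n+2))·C(2n+2, n+1), where C(2n+2, n+1) is the binomial coefficient. -/

import Mathlib

open scoped Classical

noncomputable section

namespace CambrianA

/-! ### Combinatorics of a type `A_{n+2}` quiver.

Vertices are `1, …, n+2`.  For `1 ≤ i ≤ n+1`, `ε i = true` means that the arrow between
`i` and `i+1` is oriented `i → i+1` (`i` is *upper-barred*), and `ε i = false` means it is
oriented `(i+1) → i` (`i` is *lower-barred*). -/

/-- `MaxIncr n ε i j` : the path `i → i+1 → ⋯ → j` is a maximal increasing path of `Q`. -/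
def MaxIncr (n : ℕ) (ε : ℕ → Bool) (i j : ℕ) : Prop :=
  1 ≤ i ∧ i ≤ j ∧ j ≤ n + 2 ∧ (∀ ℓ, i ≤ ℓ → ℓ < j → ε ℓ = true) ∧
    (i = 1 ∨ ε (i - 1) = false) ∧ (j = n + 2 ∨ ε j = false)

/-- `MaxDecr n ε i j` : the path `i → i-1 → ⋯ → j` is a maximal decreasing path of `Q`. -/
def MaxDecr (n : ℕ) (ε : ℕ → Bool) (i j : ℕ) : Prop :=
  1 ≤ j ∧ j ≤ i ∧ i ≤ n + 2 ∧ (∀ ℓ, j ≤ ℓ → ℓ < i → ε ℓ = false) ∧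
    (i = n + 2 ∨ ε i = true) ∧ (j = 1 ∨ ε (j - 1) = true)

/-- Vertices of the polygon lying on the lower boundary: `0`, `n+2` and lower-barred ones. -/
def LowerVertex (n : ℕ) (ε : ℕ → Bool) (x : ℕ) : Prop :=
  x = 0 ∨ x = n + 2 ∨ (1 ≤ x ∧ x ≤ n + 1 ∧ ε x = false)

/-- Vertices of the polygon lying on the upper boundary: `0`, `n+2` and upper-barred ones. -/
def UpperVertex (n : ℕ) (ε : ℕ → Bool) (x : ℕ) : Prop :=
  x = 0 ∨ x = n + 2 ∨ (1 ≤ x ∧ x ≤ n + 1 ∧ ε x = true)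

/-- `(a,b)` is a lower boundary edge: `a < b` are consecutive lower vertices. -/
def LowerEdge (n : ℕ) (ε : ℕ → Bool) (a b : ℕ) : Prop :=
  LowerVertex n ε a ∧ LowerVertex n ε b ∧ a < b ∧
    ∀ c, LowerVertex n ε c → ¬(a < c ∧ c < b)

/-- `(a,b)` is an upper boundary edge: `a < b` are consecutive upper vertices. -/
def UpperEdge (n : ℕ) (ε : ℕ → Bool) (a b : ℕ) : Prop :=
  UpperVertex n ε a ∧ UpperVertex n ε b ∧ a < b ∧
    ∀ c, UpperVertex n ε c → ¬(a < c ∧ c < b)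

def BoundaryEdge (n : ℕ) (ε : ℕ → Bool) (a b : ℕ) : Prop :=
  LowerEdge n ε a b ∨ UpperEdge n ε a b

/-- `IsHook n ε a lo hi` : the hook of the arrow of `Q` between `a` and `a+1` is the
maximal path supported on the interval `[lo, hi]`.
If `ε a = true` (arrow `a → a+1`, source `a`), the hook is the maximal decreasing path
starting at `a`; if `ε a = false` (arrow `a+1 → a`, source `a+1`), the hook is the
maximal increasing path starting at `a+1`. -/
def IsHook (n : ℕ) (ε : ℕ → Bool) (a lo hi : ℕ) : Prop :=
  if ε a = true then
    hi = a ∧ 1 ≤ lo ∧ lo ≤ a ∧ (∀ ℓ, lo ≤ ℓ → ℓ < a → ε ℓ = false) ∧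
      (lo = 1 ∨ ε (lo - 1) = true)
  else
    lo = a + 1 ∧ a + 1 ≤ hi ∧ hi ≤ n + 2 ∧ (∀ ℓ, a + 1 ≤ ℓ → ℓ < hi → ε ℓ = true) ∧
      (hi = n + 2 ∨ ε hi = false)

/-- `IsCohook n ε a lo hi` : the cohook of the arrow of `Q` between `a` and `a+1` is the
maximal path supported on the interval `[lo, hi]`, ending at the target of the arrow. -/
def IsCohook (n : ℕ) (ε : ℕ → Bool) (a lo hi : ℕ) : Prop :=
  if ε a = true then
    lo = a + 1 ∧ a + 1 ≤ hi ∧ hi ≤ n + 2 ∧ (∀ ℓ, a + 1 ≤ ℓ → ℓ < hi → ε ℓ = false) ∧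
      (hi = n + 2 ∨ ε hi = true)
  else
    hi = a ∧ 1 ≤ lo ∧ lo ≤ a ∧ (∀ ℓ, lo ≤ ℓ → ℓ < a → ε ℓ = true) ∧
      (lo = 1 ∨ ε (lo - 1) = false)

/-- Counterclockwise neighbor `R⁻¹(ℓ)` of the vertex `ℓ` of the polygon `P(Q)`, for the
cyclic order `0`, lower-barred vertices increasing, `n+2`, upper-barred vertices
decreasing. -/
def Rinv (n : ℕ) (ε : ℕ → Bool) (ℓ : ℕ) : ℕ :=
  if ℓ = n + 2 then sSup ({0} ∪ {x | 1 ≤ x ∧ x ≤ n + 1 ∧ ε x = true})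
  else if 1 ≤ ℓ ∧ ℓ ≤ n + 1 ∧ ε ℓ = true then
    sSup ({0} ∪ {x | 1 ≤ x ∧ x < ℓ ∧ ε x = true})
  else
    sInf ({n + 2} ∪ {x | ℓ < x ∧ x ≤ n + 1 ∧ ε x = false})

/-- `γ(i′,j′)` is a pivot of `γ(i,j)`. -/
def IsPivot (n : ℕ) (ε : ℕ → Bool) (i j i' j' : ℕ) : Prop :=
  (i' = Rinv n ε i ∧ j' = j ∧ Rinv n ε i < j) ∨
    (i' = i ∧ j' = Rinv n ε j ∧ i < Rinv n ε j)

/-! ### Geometry of the polygon `P(Q)`.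

The plane is identified with `ℂ`; `p x` is the vertex of the polygon labeled `x`,
for `0 ≤ x ≤ n+2`. -/

/-- The hypotheses on the points `p 0, …, p (n+2)` realizing the polygon `P(Q)`:
strictly increasing `x`-coordinates; `p 0` and `p (n+2)` on a common horizontal line `L`;
upper-barred vertices above `L`, lower-barred vertices below `L`; convex position. -/
def PolyPts (n : ℕ) (ε : ℕ → Bool) (p : ℕ → ℂ) : Prop :=
  (∀ a b, a < b → b ≤ n + 2 → (p a).re < (p b).re) ∧
    (p (n + 2)).im = (p 0).im ∧
    (∀ i, 1 ≤ i → i ≤ n + 1 →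
      (ε i = true → (p 0).im < (p i).im) ∧ (ε i = false → (p i).im < (p 0).im)) ∧
    ∀ i, i ≤ n + 2 → p i ∉ convexHull ℝ (p '' {j | j ≤ n + 2 ∧ j ≠ i})

/-- The line segment `γ(e.1, e.2)` of the polygon. -/
def Seg (p : ℕ → ℂ) (e : ℕ × ℕ) : Set ℂ := segment ℝ (p e.1) (p e.2)

/-- Two segments cross when they intersect in a point that is not a common endpoint. -/
def Cross (p : ℕ → ℂ) (e f : ℕ × ℕ) : Prop :=
  ∃ z, z ∈ Seg p e ∧ z ∈ Seg p f ∧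
    ¬((z = p e.1 ∨ z = p e.2) ∧ (z = p f.1 ∨ z = p f.2))

/-- Slope of the segment `γ(e.1, e.2)`. -/
def slope (p : ℕ → ℂ) (e : ℕ × ℕ) : ℝ :=
  ((p e.2).im - (p e.1).im) / ((p e.2).re - (p e.1).re)

def ValidPair (n : ℕ) (e : ℕ × ℕ) : Prop := e.1 < e.2 ∧ e.2 ≤ n + 2

/-- A triangulation of `P(Q)`: a maximal collection of pairwise noncrossing segments. -/
def IsTriangulation (n : ℕ) (p : ℕ → ℂ) (T : Finset (ℕ × ℕ)) : Prop :=
  (∀ e ∈ T, ValidPair n e) ∧ (∀ e ∈ T, ∀ f ∈ T, e ≠ f → ¬Cross p e f) ∧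
    ∀ e, ValidPair n e → e ∉ T → ∃ f ∈ T, Cross p e f

/-- Cross product of two planar vectors; positive iff `(u, v)` is counterclockwise. -/
def cross2 (u v : ℂ) : ℝ := u.re * v.im - u.im * v.re

/-- Arrows of the adjacency quiver `Q(T)` of a triangulation `T`: `e → f` whenever
`e` and `f` are sides of a common triangle of `T` and `f` follows `e` going
counterclockwise around that triangle. -/
def TriArrow (p : ℕ → ℂ) (T : Finset (ℕ × ℕ)) (e f : ℕ × ℕ) : Prop :=
  ∃ a b c : ℕ, a < b ∧ b < c ∧ (a, b) ∈ T ∧ (b, c) ∈ T ∧ (a, c) ∈ T ∧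
    ((0 < cross2 (p b - p a) (p c - p a) ∧
        ((e = (a, b) ∧ f = (b, c)) ∨ (e = (b, c) ∧ f = (a, c)) ∨
          (e = (a, c) ∧ f = (a, b)))) ∨
      (cross2 (p b - p a) (p c - p a) < 0 ∧
        ((e = (a, c) ∧ f = (b, c)) ∨ (e = (b, c) ∧ f = (a, b)) ∨
          (e = (a, b) ∧ f = (a, c)))))

/-! ### Representations of `Q` -/

/-- A finite dimensional representation of the quiver `Q` of type `A_{n+2}` over `k`.
The vector spaces are indexed by `ℕ`, and are required to vanish outside the set
`{1, …, n+2}` of vertices of `Q`.  For each `i`, `fwd i : V i → V (i+1)` is the structure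
map of the arrow `i → i+1` (it is required to vanish when the arrow is oriented in the
other direction, i.e. `ε i = false`) and `bwd i : V (i+1) → V i` is the structure map of
the arrow `i+1 → i` (required to vanish when `ε i = true`). -/
structure ARep (k : Type) [Field k] (n : ℕ) (ε : ℕ → Bool) where
  V : ℕ → Type
  [acg : ∀ x, AddCommGroup (V x)]
  [mod : ∀ x, Module k (V x)]
  [fdim : ∀ x, FiniteDimensional k (V x)]
  triv : ∀ x, x = 0 ∨ n + 2 < x → ∀ v : V x, v = 0
  fwd : ∀ i, V i →ₗ[k] V (i + 1)
  bwd : ∀ i, V (i + 1) →ₗ[k] V i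
  fwd_zero : ∀ i, ε i = false → fwd i = 0
  bwd_zero : ∀ i, ε i = true → bwd i = 0

attribute [instance] ARep.acg ARep.mod ARep.fdim

variable {k : Type} [Field k] {n : ℕ} {ε : ℕ → Bool}

/-- Morphisms of representations. -/
@[ext]
structure ARep.Hom (M N : ARep k n ε) where
  app : ∀ x, M.V x →ₗ[k] N.V x
  comm_fwd : ∀ i (v : M.V i), app (i + 1) (M.fwd i v) = N.fwd i (app i v)
  comm_bwd : ∀ i (v : M.V (i + 1)), app i (M.bwd i v) = N.bwd i (app (i + 1) v)

/-- The identity morphism. -/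
def ARep.Hom.id (M : ARep k n ε) : M.Hom M :=
  ⟨fun _ => LinearMap.id, fun _ _ => rfl, fun _ _ => rfl⟩

/-- Composition of morphisms. -/
def ARep.Hom.comp {M N P : ARep k n ε} (g : N.Hom P) (f : M.Hom N) : M.Hom P where
  app x := (g.app x).comp (f.app x)
  comm_fwd i v := by simp only [LinearMap.comp_apply, f.comm_fwd, g.comm_fwd]
  comm_bwd i v := by simp only [LinearMap.comp_apply, f.comm_bwd, g.comm_bwd]

/-- Sum of two morphisms. -/
def ARep.Hom.add {M N : ARep k n ε} (f g : M.Hom N) : M.Hom N where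
  app x := f.app x + g.app x
  comm_fwd i v := by
    simp only [LinearMap.add_apply, f.comm_fwd, g.comm_fwd, map_add]
  comm_bwd i v := by
    simp only [LinearMap.add_apply, f.comm_bwd, g.comm_bwd, map_add]

/-- Scalar multiple of a morphism. -/
def ARep.Hom.smul {M N : ARep k n ε} (c : k) (f : M.Hom N) : M.Hom N where
  app x := c • f.app x
  comm_fwd i v := by simp only [LinearMap.smul_apply, f.comm_fwd, map_smul]
  comm_bwd i v := by simp only [LinearMap.smul_apply, f.comm_bwd, map_smul]

/-- Isomorphism of representations. -/
def ARep.Iso (M N : ARep k n ε) : Prop :=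
  ∃ f : M.Hom N, ∀ x, Function.Bijective (f.app x)

/-- The zero representation(s). -/
def ARep.IsZero (M : ARep k n ε) : Prop := ∀ x, ∀ v : M.V x, v = 0

/-- The support of a representation. -/
def ARep.supp (M : ARep k n ε) : Set ℕ := {x | ∃ v : M.V x, v ≠ 0}

/-- Direct sum of two representations. -/
def ARep.dsum (M N : ARep k n ε) : ARep k n ε where
  V x := M.V x × N.V x
  acg _ := by infer_instance
  mod _ := by infer_instance
  fdim _ := by infer_instance
  triv x hx v := by
    have h1 := M.triv x hx v.1
    have h2 := N.triv x hx v.2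
    exact Prod.ext h1 h2
  fwd i := (M.fwd i).prodMap (N.fwd i)
  bwd i := (M.bwd i).prodMap (N.bwd i)
  fwd_zero i h := by
    show (M.fwd i).prodMap (N.fwd i) = 0
    rw [M.fwd_zero i h, N.fwd_zero i h]
    apply LinearMap.ext; rintro ⟨a, b⟩; simp
  bwd_zero i h := by
    show (M.bwd i).prodMap (N.bwd i) = 0
    rw [M.bwd_zero i h, N.bwd_zero i h]
    apply LinearMap.ext; rintro ⟨a, b⟩; simp

/-- One dimensional space `k` if `P` holds, `0` otherwise (as a submodule of `k`). -/
def fiber (k : Type) [Field k] (P : Prop) : Submodule k k := if P then ⊤ else ⊥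

/-- The canonical map `fiber k P → fiber k Q` : "identity" if `P ∧ Q`, zero otherwise. -/
def fiberMap (k : Type) [Field k] (P Q : Prop) : fiber k P →ₗ[k] fiber k Q :=
  if h : P ∧ Q then
    { toFun := fun v => ⟨(v : k), by rw [fiber, if_pos h.2]; exact Submodule.mem_top⟩
      map_add' := fun _ _ => rfl
      map_smul' := fun _ _ => rfl }
  else 0

/-- The zero representation. -/
def zeroRep (k : Type) [Field k] (n : ℕ) (ε : ℕ → Bool) : ARep k n ε where
  V _ := ↥(fiber k False)
  acg _ := by infer_instance
  mod _ := by infer_instance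
  fdim _ := by infer_instance
  triv x _ v := by
    have hfib : fiber k False = ⊥ := if_neg (fun h : False => h.elim)
    obtain ⟨w, hw⟩ := v
    apply Subtype.ext
    have hb : w ∈ (⊥ : Submodule k k) := hfib ▸ hw
    exact (Submodule.mem_bot k).1 hb
  fwd _ := 0
  bwd _ := 0
  fwd_zero _ _ := rfl
  bwd_zero _ _ := rfl

/-- The condition for a vertex `x` to be in the support of the interval representation
`M(i,j)`. -/
def SuppCond (n i j x : ℕ) : Prop := i ≤ x ∧ x ≤ j ∧ 1 ≤ x ∧ x ≤ n + 2

/-- The interval (string) representation `M(i,j)` of `Q`: one dimensional at each vertex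
`x` with `i ≤ x ≤ j`, zero elsewhere, with identity maps on all arrows whose endpoints
both lie in `[i,j]`. -/
def intervalRep (k : Type) [Field k] (n : ℕ) (ε : ℕ → Bool) (i j : ℕ) : ARep k n ε where
  V x := ↥(fiber k (SuppCond n i j x))
  acg _ := by infer_instance
  mod _ := by infer_instance
  fdim _ := by infer_instance
  triv x hx v := by
    have hP : ¬SuppCond n i j x := by simp only [SuppCond]; omega
    have hfib : fiber k (SuppCond n i j x) = ⊥ := if_neg hP
    obtain ⟨w, hw⟩ := v
    apply Subtype.ext
    have hb : w ∈ (⊥ : Submodule k k) := hfib ▸ hw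
    exact (Submodule.mem_bot k).1 hb
  fwd ℓ :=
    if ε ℓ = true then fiberMap k (SuppCond n i j ℓ) (SuppCond n i j (ℓ + 1)) else 0
  bwd ℓ :=
    if ε ℓ = true then 0 else fiberMap k (SuppCond n i j (ℓ + 1)) (SuppCond n i j ℓ)
  fwd_zero ℓ h := by simp [h]
  bwd_zero ℓ h := by simp [h]

/-- Direct sum of a list of representations. -/
def dsumList (k : Type) [Field k] (n : ℕ) (ε : ℕ → Bool) :
    List (ARep k n ε) → ARep k n ε
  | [] => zeroRep k n ε
  | M :: L => M.dsum (dsumList k n ε L)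

/-- Indecomposable representations. -/
def ARep.Indec (M : ARep k n ε) : Prop :=
  ¬M.IsZero ∧ ∀ A B : ARep k n ε, M.Iso (A.dsum B) → A.IsZero ∨ B.IsZero

/-- `A` is a direct summand of `T`. -/
def ARep.IsSummand (A T : ARep k n ε) : Prop := ∃ B : ARep k n ε, T.Iso (A.dsum B)

/-- A representation is basic when it has no repeated indecomposable direct summand. -/
def ARep.Basic (T : ARep k n ε) : Prop :=
  ∀ A : ARep k n ε, A.Indec → ¬(A.dsum A).IsSummand T

/-- A short exact sequence `0 → B → E → A → 0`. -/
structure SES (B A : ARep k n ε) where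
  E : ARep k n ε
  ι : B.Hom E
  π : E.Hom A
  inj : ∀ x, Function.Injective (ι.app x)
  surj : ∀ x, Function.Surjective (π.app x)
  exct : ∀ x (v : E.V x), π.app x v = 0 ↔ ∃ u, ι.app x u = v

/-- A short exact sequence splits. -/
def SES.Splits {B A : ARep k n ε} (σ : SES B A) : Prop :=
  ∃ r : σ.E.Hom B, ∀ x (v : B.V x), r.app x (σ.ι.app x v) = v

/-- `Ext¹(A, B) = 0` : every short exact sequence `0 → B → E → A → 0` splits. -/
def ExtZero (A B : ARep k n ε) : Prop := ∀ σ : SES B A, σ.Splits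

/-- `Ext¹(A,B) ≅ k`, generated by (the class of) a short exact sequence
`0 → B → E → A → 0` with indecomposable middle term `E`: there is a non-split such
sequence `σ` with `σ.E` indecomposable such that every non-split sequence is equivalent
to a nonzero scalar multiple of `σ`. -/
def ExtOneDimIndecMid (A B : ARep k n ε) : Prop :=
  ∃ σ : SES B A, ¬σ.Splits ∧ σ.E.Indec ∧
    ∀ τ : SES B A, ¬τ.Splits → ∃ c : k, c ≠ 0 ∧
      ∃ φ : σ.E.Hom τ.E, (∀ x, Function.Bijective (φ.app x)) ∧
        (∀ x (v : B.V x), φ.app x (σ.ι.app x v) = τ.ι.app x v) ∧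
        (∀ x (v : σ.E.V x), τ.π.app x (φ.app x v) = c • σ.π.app x v)

/-- Almost rigid representations. -/
def AlmostRigid (T : ARep k n ε) : Prop :=
  T.Basic ∧ ∀ A B : ARep k n ε, A.Indec → B.Indec → A.IsSummand T → B.IsSummand T →
    ExtZero A B ∨ ExtOneDimIndecMid A B

/-- Maximal almost rigid representations. -/
def MaxAlmostRigid (T : ARep k n ε) : Prop :=
  AlmostRigid T ∧ ∀ M : ARep k n ε, ¬M.IsZero → ¬AlmostRigid (T.dsum M)

/-- `f` is a section. -/
def ARep.Hom.IsSection {M N : ARep k n ε} (f : M.Hom N) : Prop :=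
  ∃ g : N.Hom M, ∀ x (v : M.V x), g.app x (f.app x v) = v

/-- `f` is a retraction. -/
def ARep.Hom.IsRetraction {M N : ARep k n ε} (f : M.Hom N) : Prop :=
  ∃ g : N.Hom M, ∀ x (v : N.V x), f.app x (g.app x v) = v

/-- Irreducible morphisms: `f` is neither a section nor a retraction, and in every
factorization `f = g ∘ h` either `h` is a section or `g` is a retraction. -/
def ARep.Hom.Irred {M N : ARep k n ε} (f : M.Hom N) : Prop :=
  ¬f.IsSection ∧ ¬f.IsRetraction ∧
    ∀ (Z : ARep k n ε) (h : M.Hom Z) (g : Z.Hom N),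
      (∀ x (v : M.V x), f.app x v = g.app x (h.app x v)) → h.IsSection ∨ g.IsRetraction

/-- Subrepresentations : families of subspaces closed under the structure maps. -/
structure Subrep (M : ARep k n ε) where
  U : ∀ x, Submodule k (M.V x)
  fwd_mem : ∀ i, ∀ v ∈ U i, M.fwd i v ∈ U (i + 1)
  bwd_mem : ∀ i, ∀ v ∈ U (i + 1), M.bwd i v ∈ U i

/-- The central charge `Z(M) = Σ_{x=1}^{n+2} dim_k(M_x) · (p_x − p_{x−1})`. -/
def charge (p : ℕ → ℂ) (M : ARep k n ε) : ℂ :=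
  ∑ x ∈ Finset.Icc 1 (n + 2), (Module.finrank k (M.V x) : ℂ) * (p x - p (x - 1))

/-- The central charge of a subrepresentation. -/
def subCharge (p : ℕ → ℂ) {M : ARep k n ε} (L : Subrep M) : ℂ :=
  ∑ x ∈ Finset.Icc 1 (n + 2), (Module.finrank k (L.U x) : ℂ) * (p x - p (x - 1))

/-- The representation `F(T) = ⊕_{γ(a,b) ∈ T} M(a+1, b)` attached to a collection `T` of
segments of the polygon `P(Q)`. -/
def FRep (k : Type) [Field k] (n : ℕ) (ε : ℕ → Bool) (T : Finset (ℕ × ℕ)) : ARep k n ε :=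
  dsumList k n ε (T.toList.map fun e => intervalRep k n ε (e.1 + 1) e.2)

end CambrianA

/-!
The indecomposable representations of `Q` are the interval representations `M(a, b)` supported on
`a + 1, …, b` with `0 ≤ a < b ≤ n + 2`, and they correspond to the chords `{a, b}` of a polygon with
vertices `0, …, n + 2`, where the upper-barred vertices are moved to the upper boundary and the
lower-barred ones to the lower boundary. An extension `0 → M(f) → E → M(e) → 0` is described by
scalars on the arrows whose source supports `M(e)` and whose target supports `M(f)`. These arrows
lie between the larger of the two left ends and the smaller of the two right ends of the intervals,
and all extensions split unless both extreme positions carry such an arrow. If the extreme positions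
are distinct, the chords cross, and exchanging the tails of the intervals gives a nonsplit extension
whose middle term is the sum of the interval representations on the union and the intersection,
hence decomposable. If they coincide, the intervals are adjacent, and every nonsplit extension is a
multiple of the one that glues them. So a basic representation is almost rigid exactly when its
chords do not cross, and the maximal ones correspond to the triangulations of the polygon with
`n + 3` vertices, which are counted by their dual binary trees.
-/

namespace CambrianA

/-! ### Maximal noncrossing families of chords -/

section MaximalIndep

variable {α β : Type*} {V : Set α} {R : α → α → Prop} {S : Finset α}

/-- `S` is maximal among the finite subsets of `V` no two members of which, equal or not, are
related by the "conflict" relation `R`. -/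
structure IsMaximalIndep (V : Set α) (R : α → α → Prop) (S : Finset α) : Prop where
  subset : ∀ a ∈ S, a ∈ V
  indep : ∀ a ∈ S, ∀ b ∈ S, ¬R a b
  mem_of_forall : ∀ a ∈ V, (∀ b ∈ S, ¬R a b) → a ∈ S

theorem isMaximalIndep_image_iff {W : Set β} {R' : β → β → Prop} {φ : α → β}
    (hφ : Set.BijOn φ V W) (hR : ∀ a ∈ V, ∀ b ∈ V, R' (φ a) (φ b) ↔ R a b) (hS : ↑S ⊆ V) :
    IsMaximalIndep W R' (S.image φ) ↔ IsMaximalIndep V R S := by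
  have hmem : ∀ a ∈ V, φ a ∈ S.image φ ↔ a ∈ S := fun a ha => by
    rw [← Finset.mem_coe, Finset.coe_image, hφ.injOn.mem_image_iff hS ha, Finset.mem_coe]
  constructor
  · intro h
    refine ⟨hS, fun a ha b hb => ?_, fun a ha hab => ?_⟩
    · rw [← hR a (hS ha) b (hS hb)]
      exact h.indep _ (Finset.mem_image_of_mem φ ha) _ (Finset.mem_image_of_mem φ hb)
    · refine (hmem a ha).1 (h.mem_of_forall _ (hφ.mapsTo ha) (Finset.forall_mem_image.2 ?_))
      intro b hb
      rw [hR a ha b (hS hb)]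
      exact hab b hb
  · intro h
    refine ⟨Finset.forall_mem_image.2 fun a ha => hφ.mapsTo (hS ha), Finset.forall_mem_image.2
      fun a ha => Finset.forall_mem_image.2 fun b hb => ?_, fun c hc hcb => ?_⟩
    · rw [hR a (hS ha) b (hS hb)]
      exact h.indep a ha b hb
    · obtain ⟨a, ha, rfl⟩ := hφ.surjOn hc
      refine (hmem a ha).2 (h.mem_of_forall a ha fun b hb => ?_)
      rw [← hR a ha b (hS hb)]
      exact hcb _ (Finset.mem_image_of_mem φ hb)

theorem bijOn_image_isMaximalIndep {W : Set β} {R' : β → β → Prop} {φ : α → β}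
    (hφ : Set.BijOn φ V W) (hR : ∀ a ∈ V, ∀ b ∈ V, R' (φ a) (φ b) ↔ R a b) :
    Set.BijOn (Finset.image φ) {S | IsMaximalIndep V R S} {S | IsMaximalIndep W R' S} := by
  refine ⟨fun S hS => (isMaximalIndep_image_iff hφ hR hS.subset).2 hS, fun S hS S' hS' h => ?_,
    fun T hT => ?_⟩
  · rw [← Finset.coe_inj, Finset.coe_image, Finset.coe_image] at h
    exact Finset.coe_inj.1 ((hφ.injOn.image_eq_image_iff hS.subset hS'.subset).1 h)
  · have hTφ : (T : Set β) ⊆ φ '' V := by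
      rw [hφ.image_eq]
      exact hT.subset
    obtain ⟨S, hSV, rfl⟩ := Finset.subset_set_image_iff.1 hTφ
    exact ⟨S, (isMaximalIndep_image_iff hφ hR hSV).1 hT, rfl⟩

end MaximalIndep

section Chords

variable {α β : Type*} [LinearOrder α] [LinearOrder β]

/-- The chords of a polygon whose vertices, in cyclic order, are the elements of `K` in increasing
order. The sides of the polygon count as chords. -/
def chords (K : Set α) : Set (α × α) := {e | e.1 ∈ K ∧ e.2 ∈ K ∧ e.1 < e.2}

/-- Two chords cross in the interior of the polygon, that is, their endpoints alternate. -/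
def Interlace (e f : α × α) : Prop :=
  (e.1 < f.1 ∧ f.1 < e.2 ∧ e.2 < f.2) ∨ (f.1 < e.1 ∧ e.1 < f.2 ∧ f.2 < e.2)

/-- A maximal family of pairwise noncrossing chords of the polygon with vertex set `K`; the sides
of the polygon belong to every such family. -/
abbrev IsMaximalNoncrossing (K : Set α) (S : Finset (α × α)) : Prop :=
  IsMaximalIndep (chords K) Interlace S

theorem bijOn_prodMap_chords {K : Set α} {L : Set β} {ρ : α → β} (hρ : StrictMonoOn ρ K)
    (hKL : Set.BijOn ρ K L) : Set.BijOn (Prod.map ρ ρ) (chords K) (chords L) := by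
  refine ⟨fun e he => ⟨hKL.mapsTo he.1, hKL.mapsTo he.2.1, hρ he.1 he.2.1 he.2.2⟩,
    fun e he f hf hef => ?_, fun f hf => ?_⟩
  · obtain ⟨h₁, h₂⟩ := Prod.mk.inj hef
    exact Prod.ext (hKL.injOn he.1 hf.1 h₁) (hKL.injOn he.2.1 hf.2.1 h₂)
  · obtain ⟨x, hx, hxf⟩ := hKL.surjOn hf.1
    obtain ⟨y, hy, hyf⟩ := hKL.surjOn hf.2.1
    refine ⟨(x, y), ⟨hx, hy, (hρ.lt_iff_lt hx hy).1 ?_⟩, Prod.ext hxf hyf⟩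
    rw [hxf, hyf]
    exact hf.2.2

theorem interlace_prodMap_iff {K : Set α} {ρ : α → β} (hρ : StrictMonoOn ρ K) {e f : α × α}
    (he : e ∈ chords K) (hf : f ∈ chords K) :
    Interlace (Prod.map ρ ρ e) (Prod.map ρ ρ f) ↔ Interlace e f := by
  simp only [Interlace, Prod.map_fst, Prod.map_snd, hρ.lt_iff_lt he.1 hf.1,
    hρ.lt_iff_lt hf.1 he.1, hρ.lt_iff_lt hf.1 he.2.1, hρ.lt_iff_lt he.2.1 hf.2.1,
    hρ.lt_iff_lt he.1 hf.2.1, hρ.lt_iff_lt hf.2.1 he.2.1]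

end Chords

section Triangulations

variable {i j m : ℕ} {S A B : Finset (ℕ × ℕ)}

theorem mem_chords_Icc {e : ℕ × ℕ} : e ∈ chords (Set.Icc i j) ↔ i ≤ e.1 ∧ e.1 < e.2 ∧ e.2 ≤ j := by
  simp only [chords, Set.mem_Icc, Set.mem_ofPred_eq]
  omega

theorem IsMaximalNoncrossing.outer_mem (hS : IsMaximalNoncrossing (Set.Icc i j) S) (hij : i < j) :
    (i, j) ∈ S := by
  refine hS.mem_of_forall _ (mem_chords_Icc.2 (by simp [hij])) fun f hf => ?_
  have := mem_chords_Icc.1 (hS.subset f hf)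
  simp only [Interlace]
  omega

theorem IsMaximalNoncrossing.restrict (hS : IsMaximalNoncrossing (Set.Icc i j) S) {a b : ℕ}
    (hab : (a, b) ∈ S) :
    IsMaximalNoncrossing (Set.Icc a b) {e ∈ S | e ∈ chords (Set.Icc a b)} where
  subset e he := (Finset.mem_filter.1 he).2
  indep e he f hf := hS.indep e (Finset.filter_subset _ _ he) f (Finset.filter_subset _ _ hf)
  mem_of_forall e he h := by
    have habij := mem_chords_Icc.1 (hS.subset _ hab)
    have heab := mem_chords_Icc.1 he
    refine Finset.mem_filter.2 ⟨hS.mem_of_forall e ?_ fun f hf => ?_, he⟩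
    · rw [mem_chords_Icc]
      omega
    · by_cases hfab : f ∈ chords (Set.Icc a b)
      · exact h f (Finset.mem_filter.2 ⟨hf, hfab⟩)
      · have hfij := mem_chords_Icc.1 (hS.subset f hf)
        have hcross := hS.indep f hf _ hab
        simp only [mem_chords_Icc, Interlace] at hfab hcross ⊢
        omega

/-- The apex is the largest vertex other than `j` joined to `i`. -/
theorem IsMaximalNoncrossing.exists_apex (hS : IsMaximalNoncrossing (Set.Icc i j) S)
    (hij : i + 1 < j) : ∃ m, (i, m) ∈ S ∧ (m, j) ∈ S := by
  have hside : (i, i + 1) ∈ S := by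
    refine hS.mem_of_forall _ (mem_chords_Icc.2 (by simp; omega)) fun f hf => ?_
    have := mem_chords_Icc.1 (hS.subset f hf)
    simp only [Interlace]
    omega
  obtain ⟨m, hm, hmax⟩ := Finset.exists_max_image {m ∈ Finset.range j | (i, m) ∈ S} id
    ⟨i + 1, by simpa using ⟨hij, hside⟩⟩
  simp only [Finset.mem_filter, Finset.mem_range, id, and_imp] at hm hmax
  refine ⟨m, hm.2, hS.mem_of_forall _ ?_ ?_⟩
  · have := mem_chords_Icc.1 (hS.subset _ hm.2)
    rw [mem_chords_Icc]
    omega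
  · rintro ⟨a, b⟩ hab hcross
    have hin := mem_chords_Icc.1 (hS.subset _ hab)
    have hnc := hS.indep _ hab _ hm.2
    simp only [Interlace] at hin hnc hcross
    obtain rfl : a = i := by omega
    have := hmax b (by omega) hab
    omega

theorem IsMaximalNoncrossing.apex_unique (hS : IsMaximalNoncrossing (Set.Icc i j) S) {m m' : ℕ}
    (him : (i, m) ∈ S) (hmj : (m, j) ∈ S) (him' : (i, m') ∈ S) (hmj' : (m', j) ∈ S) : m = m' := by
  have h₁ := hS.indep _ hmj _ him'
  have h₂ := hS.indep _ hmj' _ him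
  have := mem_chords_Icc.1 (hS.subset _ him)
  have := mem_chords_Icc.1 (hS.subset _ hmj)
  have := mem_chords_Icc.1 (hS.subset _ him')
  have := mem_chords_Icc.1 (hS.subset _ hmj')
  simp only [Interlace] at *
  omega

theorem IsMaximalNoncrossing.eq_insert_restrict_union
    (hS : IsMaximalNoncrossing (Set.Icc i j) S) (him : (i, m) ∈ S) (hmj : (m, j) ∈ S) :
    S = insert (i, j)
      ({e ∈ S | e ∈ chords (Set.Icc i m)} ∪ {e ∈ S | e ∈ chords (Set.Icc m j)}) := by
  have him' := mem_chords_Icc.1 (hS.subset _ him)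
  have hmj' := mem_chords_Icc.1 (hS.subset _ hmj)
  ext e
  simp only [Finset.mem_insert, Finset.mem_union, Finset.mem_filter, mem_chords_Icc]
  refine ⟨fun he => ?_, ?_⟩
  · have hin := mem_chords_Icc.1 (hS.subset e he)
    have h₁ := hS.indep e he _ him
    have h₂ := hS.indep e he _ hmj
    simp only [he, true_and, Interlace, Prod.ext_iff] at h₁ h₂ ⊢
    omega
  · rintro (rfl | he | he)
    · exact hS.outer_mem (by omega)
    · exact he.1
    · exact he.1

theorem IsMaximalNoncrossing.glue (hA : IsMaximalNoncrossing (Set.Icc i m) A)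
    (hB : IsMaximalNoncrossing (Set.Icc m j) B) (him : i < m) (hmj : m < j) :
    IsMaximalNoncrossing (Set.Icc i j) (insert (i, j) (A ∪ B)) where
  subset := by
    simp only [Finset.mem_insert, Finset.mem_union]
    rintro e (rfl | he | he)
    · exact mem_chords_Icc.2 (by simp; omega)
    · have := mem_chords_Icc.1 (hA.subset e he)
      exact mem_chords_Icc.2 (by omega)
    · have := mem_chords_Icc.1 (hB.subset e he)
      exact mem_chords_Icc.2 (by omega)
  indep := by
    have hA' := fun e he => mem_chords_Icc.1 (hA.subset e he)
    have hB' := fun e he => mem_chords_Icc.1 (hB.subset e he)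
    simp only [Finset.mem_insert, Finset.mem_union]
    rintro e (rfl | he | he) f (rfl | hf | hf)
    case inr.inl.inr.inl => exact hA.indep e he f hf
    case inr.inr.inr.inr => exact hB.indep e he f hf
    all_goals grind [Interlace]
  mem_of_forall e he h := by
    simp only [Finset.mem_insert, Finset.mem_union] at h ⊢
    rw [mem_chords_Icc] at he
    by_cases hem : e.2 ≤ m
    · exact .inr (.inl (hA.mem_of_forall e (mem_chords_Icc.2 (by omega)) fun f hf =>
        h f (.inr (.inl hf))))
    by_cases hme : m ≤ e.1
    · exact .inr (.inr (hB.mem_of_forall e (mem_chords_Icc.2 (by omega)) fun f hf =>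
        h f (.inr (.inr hf))))
    have h₁ := h _ (.inr (.inl (hA.outer_mem him)))
    have h₂ := h _ (.inr (.inr (hB.outer_mem hmj)))
    simp only [Interlace, Prod.ext_iff] at h₁ h₂ ⊢
    omega

/-- The triangulation dual to a binary tree: the root is the triangle on the side
`(i, i + t.numNodes + 1)` and its subtrees triangulate the polygons beyond the other two sides. -/
def triangulation : BinaryTree Unit → ℕ → Finset (ℕ × ℕ)
  | .nil, i => {(i, i + 1)}
  | .node _ l r, i =>
    insert (i, i + l.numNodes + 1 + r.numNodes + 1)
      (triangulation l i ∪ triangulation r (i + l.numNodes + 1))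

theorem isMaximalNoncrossing_triangulation (t : BinaryTree Unit) (i : ℕ) :
    IsMaximalNoncrossing (Set.Icc i (i + t.numNodes + 1)) (triangulation t i) := by
  induction t generalizing i with
  | nil =>
    refine ⟨?_, ?_, fun e he _ => ?_⟩
    · simp [triangulation, mem_chords_Icc, BinaryTree.numNodes]
    · simp [triangulation, Interlace]
    · rw [mem_chords_Icc, BinaryTree.numNodes] at he
      simp only [triangulation, Finset.mem_singleton, Prod.ext_iff]
      omega
  | node _ l r ihl ihr =>
    have hnum : i + (l.numNodes + r.numNodes + 1) + 1 = i + l.numNodes + 1 + r.numNodes + 1 := by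
      omega
    rw [triangulation, BinaryTree.numNodes, hnum]
    exact (ihl i).glue (ihr _) (by omega) (by omega)

theorem exists_triangulation_eq {d : ℕ} (hS : IsMaximalNoncrossing (Set.Icc i (i + d + 1)) S) :
    ∃ t : BinaryTree Unit, t.numNodes = d ∧ triangulation t i = S := by
  induction d using Nat.strong_induction_on generalizing i S with
  | _ d ih =>
    rcases Nat.eq_zero_or_pos d with rfl | hd
    · refine ⟨.nil, rfl, Finset.Subset.antisymm ?_ fun e he => ?_⟩
      · simpa [triangulation] using hS.outer_mem (by omega)
      · have := mem_chords_Icc.1 (hS.subset e he)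
        simp only [triangulation, Finset.mem_singleton, Prod.ext_iff]
        omega
    · obtain ⟨m, him, hmj⟩ := hS.exists_apex (by omega)
      have him' := mem_chords_Icc.1 (hS.subset _ him)
      have hmj' := mem_chords_Icc.1 (hS.subset _ hmj)
      obtain ⟨u, rfl⟩ : ∃ u, m = i + u + 1 := ⟨m - i - 1, by omega⟩
      obtain ⟨v, rfl⟩ : ∃ v, d = u + v + 1 := ⟨d - u - 1, by omega⟩
      have hend : i + (u + v + 1) + 1 = i + u + 1 + v + 1 := by omega
      rw [hend] at hS hmj
      obtain ⟨l, rfl, hl⟩ := ih u (by omega) (hS.restrict him)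
      obtain ⟨r, rfl, hr⟩ := ih v (by omega) (hS.restrict hmj)
      refine ⟨.node () l r, rfl, ?_⟩
      rw [triangulation, hl, hr]
      exact (hS.eq_insert_restrict_union him hmj).symm

theorem triangulation_restrict_left (l r : BinaryTree Unit) (i : ℕ) :
    {e ∈ triangulation (.node () l r) i | e ∈ chords (Set.Icc i (i + l.numNodes + 1))} =
      triangulation l i := by
  have hl := fun e he => mem_chords_Icc.1 ((isMaximalNoncrossing_triangulation l i).subset e he)
  have hr := fun e he => mem_chords_Icc.1
    ((isMaximalNoncrossing_triangulation r (i + l.numNodes + 1)).subset e he)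
  ext e
  simp only [triangulation, Finset.mem_filter, Finset.mem_insert, Finset.mem_union, mem_chords_Icc]
  grind

theorem triangulation_restrict_right (l r : BinaryTree Unit) (i : ℕ) :
    {e ∈ triangulation (.node () l r) i |
        e ∈ chords (Set.Icc (i + l.numNodes + 1) (i + l.numNodes + 1 + r.numNodes + 1))} =
      triangulation r (i + l.numNodes + 1) := by
  have hl := fun e he => mem_chords_Icc.1 ((isMaximalNoncrossing_triangulation l i).subset e he)
  have hr := fun e he => mem_chords_Icc.1
    ((isMaximalNoncrossing_triangulation r (i + l.numNodes + 1)).subset e he)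
  ext e
  simp only [triangulation, Finset.mem_filter, Finset.mem_insert, Finset.mem_union, mem_chords_Icc]
  grind

theorem apex_mem_triangulation (l r : BinaryTree Unit) (i : ℕ) :
    (i, i + l.numNodes + 1) ∈ triangulation (.node () l r) i ∧
      (i + l.numNodes + 1, i + l.numNodes + 1 + r.numNodes + 1) ∈
        triangulation (.node () l r) i := by
  simp only [triangulation, Finset.mem_insert, Finset.mem_union]
  exact ⟨.inr (.inl ((isMaximalNoncrossing_triangulation l i).outer_mem (by omega))),
    .inr (.inr ((isMaximalNoncrossing_triangulation r _).outer_mem (by omega)))⟩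

theorem eq_of_triangulation_eq {t t' : BinaryTree Unit} (hn : t.numNodes = t'.numNodes)
    (h : triangulation t i = triangulation t' i) : t = t' := by
  induction t generalizing t' i with
  | nil => cases t' <;> simp_all [BinaryTree.numNodes]
  | node _ l r ihl ihr =>
    obtain _ | ⟨_, l', r'⟩ := t'
    · simp [BinaryTree.numNodes] at hn
    simp only [BinaryTree.numNodes] at hn
    obtain ⟨hl, hr⟩ := apex_mem_triangulation l r i
    obtain ⟨hl', hr'⟩ := apex_mem_triangulation l' r' i
    have hnum : i + (l.numNodes + r.numNodes + 1) + 1 = i + l.numNodes + 1 + r.numNodes + 1 := by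
      omega
    have hend : i + l'.numNodes + 1 + r'.numNodes + 1 = i + l.numNodes + 1 + r.numNodes + 1 := by
      omega
    have hmax := isMaximalNoncrossing_triangulation (.node () l r) i
    rw [BinaryTree.numNodes, hnum] at hmax
    rw [hend] at hr'
    have hnl : l.numNodes = l'.numNodes := by
      have := hmax.apex_unique hl hr (h ▸ hl') (h ▸ hr')
      omega
    have hnr : r.numNodes = r'.numNodes := by omega
    have hleft : triangulation l i = triangulation l' i := by
      rw [← triangulation_restrict_left l r, ← triangulation_restrict_left l' r', ← h, hnl]
    have hright : triangulation r (i + l.numNodes + 1) = triangulation r' (i + l.numNodes + 1) := by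
      rw [← triangulation_restrict_right l r, hnl, ← triangulation_restrict_right l' r', ← h, hnr]
    rw [ihl hnl hleft, ihr hnr hright]

theorem encard_isMaximalNoncrossing_Icc (d : ℕ) :
    {S | IsMaximalNoncrossing (Set.Icc 0 (d + 1)) S}.encard = catalan d := by
  have hbij : Set.BijOn (triangulation · 0) (BinaryTree.treesOfNumNodesEq d)
      {S | IsMaximalNoncrossing (Set.Icc 0 (d + 1)) S} := by
    rw [BinaryTree.coe_treesOfNumNodesEq]
    refine ⟨fun t ht => ?_, fun t ht t' ht' => eq_of_triangulation_eq (ht.trans ht'.symm),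
      fun S hS => exists_triangulation_eq (by simpa using hS)⟩
    simpa [show t.numNodes = d from ht] using isMaximalNoncrossing_triangulation t 0
  rw [← Set.encard_congr (Set.BijOn.equiv _ hbij), Set.encard_coe_eq_coe_finsetCard,
    BinaryTree.treesOfNumNodesEq_card_eq_catalan]

variable {α : Type*} [LinearOrder α]

theorem strictMonoOn_card_filter_lt (K : Finset α) :
    StrictMonoOn (fun x => {y ∈ K | y < x}.card) (K : Set α) := fun x hx y _ hxy =>
  Finset.card_lt_card <| (Finset.ssubset_iff_of_subset
    (Finset.monotone_filter_right K fun _ _ hz => lt_trans hz hxy)).2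
      ⟨x, by simpa using ⟨hx, hxy⟩, by simp⟩

theorem bijOn_card_filter_lt {K : Finset α} {d : ℕ} (hK : K.card = d + 1) :
    Set.BijOn (fun x => {y ∈ K | y < x}.card) (K : Set α) (Set.Icc 0 d) := by
  have hmaps : Set.MapsTo (fun x => {y ∈ K | y < x}.card) (K : Set α) (Finset.Icc 0 d) := by
    intro x hx
    have : {y ∈ K | y < x}.card < K.card :=
      Finset.card_lt_card (Finset.filter_ssubset.2 ⟨x, hx, lt_irrefl x⟩)
    simp only [Finset.coe_Icc, Set.mem_Icc]
    omega
  have hinj := (strictMonoOn_card_filter_lt K).injOn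
  rw [← Finset.coe_Icc]
  exact ⟨hmaps, hinj, Finset.surjOn_of_injOn_of_card_le _ hmaps hinj (by simp [hK])⟩

theorem encard_isMaximalNoncrossing {K : Finset α} {d : ℕ} (hK : K.card = d + 2) :
    {S | IsMaximalNoncrossing (K : Set α) S}.encard = catalan d := by
  have hmono := strictMonoOn_card_filter_lt K
  rw [← encard_isMaximalNoncrossing_Icc]
  exact Set.encard_congr (Set.BijOn.equiv _ (bijOn_image_isMaximalIndep
    (bijOn_prodMap_chords hmono (bijOn_card_filter_lt hK))
    fun e he f hf => interlace_prodMap_iff hmono he hf))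

end Triangulations

/-! ### Overlaps of intervals and crossings of chords -/

section Overlap

variable {n : ℕ} {ε : ℕ → Bool} {e f : ℕ × ℕ}

/-- The intervals `(e.1, e.2]` and `(f.1, f.2]` intersect, and their ends are oriented in such a
way that there is a nonsplit extension `0 → M(f) → E → M(e) → 0` whose middle term is decomposable,
namely the sum of the interval representations on the union and the intersection. -/
def Overlap (ε : ℕ → Bool) (e f : ℕ × ℕ) : Prop :=
  max e.1 f.1 < min e.2 f.2 ∧
    ((e.1 < f.1 ∧ ε f.1 = true) ∨ (f.1 < e.1 ∧ ε e.1 = false)) ∧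
    ((e.2 < f.2 ∧ ε e.2 = true) ∨ (f.2 < e.2 ∧ ε f.2 = false))

/-- A strictly increasing function of the position of the vertex `x` on the boundary of `P(Q)`,
read counterclockwise from `0`: the upper vertices come last, in decreasing order. -/
def boundaryKey (n : ℕ) (ε : ℕ → Bool) (x : ℕ) : ℕ :=
  if 1 ≤ x ∧ x ≤ n + 1 ∧ ε x = true then 2 * (n + 2) - x else x

/-- The segment `γ(e.1, e.2)` as a chord between boundary positions. -/
def boundaryChord (n : ℕ) (ε : ℕ → Bool) (e : ℕ × ℕ) : ℕ × ℕ :=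
  (min (boundaryKey n ε e.1) (boundaryKey n ε e.2), max (boundaryKey n ε e.1) (boundaryKey n ε e.2))

theorem boundaryKey_injOn : Set.InjOn (boundaryKey n ε) {x | x ≤ n + 2} := by
  intro x hx y hy hxy
  simp only [boundaryKey, Set.mem_ofPred_eq] at hx hy hxy
  split_ifs at hxy <;> omega

theorem bijOn_boundaryChord :
    Set.BijOn (boundaryChord n ε) {e | ValidPair n e}
      (chords ((Finset.range (n + 3)).image (boundaryKey n ε) : Set ℕ)) := by
  refine ⟨fun e he => ?_, fun e he f hf hef => ?_, fun c hc => ?_⟩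
  · have hne := boundaryKey_injOn (ε := ε).ne (show e.1 ≤ n + 2 by grind [ValidPair]) he.2 he.1.ne
    grind [ValidPair, chords, boundaryChord]
  · have := @boundaryKey_injOn n ε
    simp only [Set.InjOn, Set.mem_ofPred_eq, boundaryChord, Prod.ext_iff, ValidPair] at *
    grind
  · simp only [chords, Finset.coe_image, Set.mem_image, Finset.coe_range, Set.mem_Iio] at hc
    obtain ⟨⟨x, hx, hxc⟩, ⟨y, hy, hyc⟩, hlt⟩ := hc
    refine ⟨(min x y, max x y), ?_, ?_⟩
    · have : x ≠ y := by grind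
      simp only [ValidPair, Set.mem_ofPred_eq]
      omega
    · rcases le_total x y with h | h <;>
        simp [boundaryChord, h, hxc, hyc, hlt.le]

theorem boundaryKey_compare (ε : ℕ → Bool) {x y : ℕ} (hxy : x < y) (hy : y ≤ n + 2) :
    if 0 < x ∧ ε x = true then boundaryKey n ε y < boundaryKey n ε x
      else boundaryKey n ε x < boundaryKey n ε y := by
  grind [boundaryKey]

theorem interlace_iff_of_staggered {a b c d : ℕ} (hac : a < c) (hcb : c < b) (hbd : b < d)
    (hd : d ≤ n + 2) :
    Interlace (boundaryChord n ε (a, b)) (boundaryChord n ε (c, d)) ↔ ε c = ε b := by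
  have hab' := boundaryKey_compare ε (hac.trans hcb) (by omega : b ≤ n + 2)
  have hac' := boundaryKey_compare ε hac (by omega : c ≤ n + 2)
  have had' := boundaryKey_compare ε ((hac.trans hcb).trans hbd) hd
  have hcb' := boundaryKey_compare ε hcb (by omega : b ≤ n + 2)
  have hcd' := boundaryKey_compare ε (hcb.trans hbd) hd
  have hbd' := boundaryKey_compare ε hbd hd
  simp only [boundaryChord, Interlace]
  cases hεc : ε c <;> cases hεb : ε b <;> grind

theorem interlace_iff_of_nested {a b c d : ℕ} (hac : a < c) (hcd : c < d) (hdb : d < b)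
    (hb : b ≤ n + 2) :
    Interlace (boundaryChord n ε (a, b)) (boundaryChord n ε (c, d)) ↔ ε c ≠ ε d := by
  have hac' := boundaryKey_compare ε hac (by omega : c ≤ n + 2)
  have had' := boundaryKey_compare ε (hac.trans hcd) (by omega : d ≤ n + 2)
  have hab' := boundaryKey_compare ε ((hac.trans hcd).trans hdb) hb
  have hcd' := boundaryKey_compare ε hcd (by omega : d ≤ n + 2)
  have hcb' := boundaryKey_compare ε (hcd.trans hdb) hb
  have hdb' := boundaryKey_compare ε hdb hb
  simp only [boundaryChord, Interlace]
  cases hεc : ε c <;> cases hεd : ε d <;> grind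

theorem not_interlace_of_le {a b c d : ℕ} (hab : a < b) (hbc : b ≤ c) (hcd : c < d)
    (hd : d ≤ n + 2) :
    ¬Interlace (boundaryChord n ε (a, b)) (boundaryChord n ε (c, d)) := by
  rcases hbc.eq_or_lt with rfl | hbc
  · simp only [boundaryChord, Interlace]
    omega
  have hab' := boundaryKey_compare ε hab (by omega : b ≤ n + 2)
  have hac' := boundaryKey_compare ε (hab.trans hbc) (by omega : c ≤ n + 2)
  have had' := boundaryKey_compare ε ((hab.trans hbc).trans hcd) hd
  have hbc' := boundaryKey_compare ε hbc (by omega : c ≤ n + 2)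
  have hbd' := boundaryKey_compare ε (hbc.trans hcd) hd
  simp only [boundaryChord, Interlace]
  grind

theorem not_interlace_of_share {a b c d : ℕ} (h : a = c ∨ b = d) :
    ¬Interlace (boundaryChord n ε (a, b)) (boundaryChord n ε (c, d)) := by
  simp only [boundaryChord, Interlace]
  rcases h with rfl | rfl <;> omega

theorem overlap_or_overlap_iff_interlace (he : ValidPair n e) (hf : ValidPair n f) :
    (Overlap ε e f ∨ Overlap ε f e) ↔ Interlace (boundaryChord n ε e) (boundaryChord n ε f) := by
  wlog hlt : e.1 ≤ f.1 generalizing e f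
  · rw [or_comm, this hf he (by omega)]
    exact or_comm
  obtain ⟨a, b⟩ := e
  obtain ⟨c, d⟩ := f
  simp only [ValidPair] at he hf hlt
  by_cases hshare : a = c ∨ b = d
  · refine iff_of_false ?_ (not_interlace_of_share hshare)
    simp only [Overlap]
    omega
  by_cases hbc : b ≤ c
  · refine iff_of_false ?_ (not_interlace_of_le he.1 hbc hf.1 hf.2)
    simp only [Overlap]
    omega
  rcases lt_or_gt_of_ne (not_or.1 hshare).2 with hbd | hdb
  · rw [interlace_iff_of_staggered (by omega) (by omega) hbd hf.2]
    simp only [Overlap]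
    cases ε b <;> cases ε c <;> simp <;> omega
  · rw [interlace_iff_of_nested (by omega) hf.1 hdb he.2]
    simp only [Overlap]
    cases ε c <;> cases ε d <;> simp <;> omega

/-- A maximal family of segments, any two of which have no overlap. -/
abbrev IsMaximalNonoverlapping (n : ℕ) (ε : ℕ → Bool) (S : Finset (ℕ × ℕ)) : Prop :=
  IsMaximalIndep {e | ValidPair n e} (fun e f => Overlap ε e f ∨ Overlap ε f e) S

theorem encard_isMaximalNonoverlapping (n : ℕ) (ε : ℕ → Bool) :
    {S | IsMaximalNonoverlapping n ε S}.encard = catalan (n + 1) := by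
  rw [← encard_isMaximalNoncrossing (K := (Finset.range (n + 3)).image (boundaryKey n ε))]
  · refine Set.encard_congr (Set.BijOn.equiv _ (bijOn_image_isMaximalIndep bijOn_boundaryChord
      fun e he f hf => (overlap_or_overlap_iff_interlace he hf).symm))
  · rw [Finset.card_image_of_injOn fun x hx y hy => ?_, Finset.card_range]
    exact boundaryKey_injOn (Nat.lt_succ_iff.1 (Finset.mem_range.1 hx))
      (Nat.lt_succ_iff.1 (Finset.mem_range.1 hy))

end Overlap

/-! ### Retracts, kernels and direct sums of representations -/

namespace ARep

variable {k : Type} [Field k] {n : ℕ} {ε : ℕ → Bool} {A B C A' B' M N P T T' : ARep k n ε}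

namespace Hom

@[simp] theorem comp_app (g : N.Hom P) (f : M.Hom N) (x : ℕ) (v : M.V x) :
    (g.comp f).app x v = g.app x (f.app x v) := rfl

/-- The inverse of a bijective morphism. -/
def inverse (f : M.Hom N) (hf : ∀ x, Function.Bijective (f.app x)) : N.Hom M where
  app x := ((LinearEquiv.ofBijective (f.app x) (hf x)).symm : N.V x →ₗ[k] M.V x)
  comm_fwd i v := (hf (i + 1)).1 <| by
    rw [f.comm_fwd, LinearEquiv.coe_coe, LinearEquiv.apply_ofBijective_symm_apply,
      LinearEquiv.coe_coe, LinearEquiv.apply_ofBijective_symm_apply]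
  comm_bwd i v := (hf i).1 <| by
    rw [f.comm_bwd, LinearEquiv.coe_coe, LinearEquiv.apply_ofBijective_symm_apply,
      LinearEquiv.coe_coe, LinearEquiv.apply_ofBijective_symm_apply]

@[simp] theorem apply_inverse_apply (f : M.Hom N) (hf : ∀ x, Function.Bijective (f.app x))
    (x : ℕ) (v : N.V x) : f.app x ((f.inverse hf).app x v) = v :=
  LinearEquiv.apply_ofBijective_symm_apply _ v

@[simp] theorem inverse_apply_apply (f : M.Hom N) (hf : ∀ x, Function.Bijective (f.app x))
    (x : ℕ) (v : M.V x) : (f.inverse hf).app x (f.app x v) = v :=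
  LinearEquiv.ofBijective_symm_apply_apply _ v

theorem bijective_of_inverse (f : M.Hom N) (g : N.Hom M) (hgf : ∀ x v, g.app x (f.app x v) = v)
    (hfg : ∀ x v, f.app x (g.app x v) = v) (x : ℕ) : Function.Bijective (f.app x) :=
  ⟨Function.LeftInverse.injective (hgf x), Function.RightInverse.surjective (hfg x)⟩

theorem inverse_bijective (f : M.Hom N) (hf : ∀ x, Function.Bijective (f.app x)) (x : ℕ) :
    Function.Bijective ((f.inverse hf).app x) :=
  (LinearEquiv.ofBijective (f.app x) (hf x)).symm.bijective

/-- The zero morphism. -/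
protected def zero (M N : ARep k n ε) : M.Hom N where
  app _ := 0
  comm_fwd _ _ := by simp only [LinearMap.zero_apply, map_zero]
  comm_bwd _ _ := by simp only [LinearMap.zero_apply, map_zero]

/-- The projection of a direct sum to its first summand. -/
protected def fst (A B : ARep k n ε) : (A.dsum B).Hom A where
  app x := LinearMap.fst k (A.V x) (B.V x)
  comm_fwd _ _ := rfl
  comm_bwd _ _ := rfl

/-- The projection of a direct sum to its second summand. -/
protected def snd (A B : ARep k n ε) : (A.dsum B).Hom B where
  app x := LinearMap.snd k (A.V x) (B.V x)
  comm_fwd _ _ := rfl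
  comm_bwd _ _ := rfl

/-- The morphism to a direct sum with given components. -/
def pair (f : A.Hom B) (g : A.Hom C) : A.Hom (B.dsum C) where
  app x := (f.app x).prod (g.app x)
  comm_fwd i v := Prod.ext (f.comm_fwd i v) (g.comm_fwd i v)
  comm_bwd i v := Prod.ext (f.comm_bwd i v) (g.comm_bwd i v)

/-- The inclusion of the first summand of a direct sum. -/
def inl (A B : ARep k n ε) : A.Hom (A.dsum B) := pair (Hom.id A) (Hom.zero A B)

/-- The inclusion of the second summand of a direct sum. -/
def inr (A B : ARep k n ε) : B.Hom (A.dsum B) := pair (Hom.zero B A) (Hom.id B)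

/-- The direct sum of two morphisms. -/
protected def map (f : A.Hom A') (g : B.Hom B') : (A.dsum B).Hom (A'.dsum B') :=
  pair (f.comp (Hom.fst A B)) (g.comp (Hom.snd A B))

end Hom

theorem Iso.refl (M : ARep k n ε) : M.Iso M := ⟨Hom.id M, fun _ => Function.bijective_id⟩

theorem Iso.symm : M.Iso N → N.Iso M
  | ⟨f, hf⟩ => ⟨f.inverse hf, f.inverse_bijective hf⟩

theorem Iso.trans : M.Iso N → N.Iso P → M.Iso P
  | ⟨f, hf⟩, ⟨g, hg⟩ => ⟨g.comp f, fun x => (hg x).comp (hf x)⟩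

theorem Iso.dsum : A.Iso A' → B.Iso B' → (A.dsum B).Iso (A'.dsum B')
  | ⟨f, hf⟩, ⟨g, hg⟩ => ⟨f.map g, fun x => Function.Bijective.prodMap (hf x) (hg x)⟩

theorem dsum_comm (A B : ARep k n ε) : (A.dsum B).Iso (B.dsum A) :=
  ⟨(Hom.snd A B).pair (Hom.fst A B), fun _ => Prod.swap_bijective⟩

/-- `A` is a retract of `T`; this is the same as being a direct summand, see `isSummand_iff`. -/
def IsRetract (A T : ARep k n ε) : Prop :=
  ∃ (f : A.Hom T) (g : T.Hom A), ∀ x v, g.app x (f.app x v) = v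

theorem Iso.isRetract : M.Iso N → M.IsRetract N
  | ⟨f, hf⟩ => ⟨f, f.inverse hf, f.inverse_apply_apply hf⟩

theorem IsRetract.trans : A.IsRetract B → B.IsRetract C → A.IsRetract C
  | ⟨f, g, hgf⟩, ⟨f', g', hgf'⟩ => ⟨f'.comp f, g.comp g', fun x v => by
      simp only [Hom.comp_app, hgf', hgf]⟩

theorem isRetract_inl (A B : ARep k n ε) : A.IsRetract (A.dsum B) :=
  ⟨Hom.inl A B, Hom.fst A B, fun _ _ => rfl⟩

theorem isRetract_inr (A B : ARep k n ε) : B.IsRetract (A.dsum B) :=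
  ⟨Hom.inr A B, Hom.snd A B, fun _ _ => rfl⟩

theorem IsRetract.dsum : A.IsRetract A' → B.IsRetract B' → (A.dsum B).IsRetract (A'.dsum B')
  | ⟨f, g, hgf⟩, ⟨f', g', hgf'⟩ =>
    ⟨f.map f', g.map g', fun x v => Prod.ext (hgf x v.1) (hgf' x v.2)⟩

/-- The kernel of a morphism. -/
def ker (g : M.Hom N) : ARep k n ε where
  V x := LinearMap.ker (g.app x)
  triv x hx v := Subtype.ext (M.triv x hx v.1)
  fwd i := (M.fwd i).restrict fun v hv => by
    rw [LinearMap.mem_ker] at hv ⊢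
    rw [g.comm_fwd, hv, map_zero]
  bwd i := (M.bwd i).restrict fun v hv => by
    rw [LinearMap.mem_ker] at hv ⊢
    rw [g.comm_bwd, hv, map_zero]
  fwd_zero i h := by
    ext v
    simp [M.fwd_zero i h]
  bwd_zero i h := by
    ext v
    simp [M.bwd_zero i h]

theorem Hom.sub_mem_ker (f : A.Hom T) (g : T.Hom A) (hgf : ∀ x v, g.app x (f.app x v) = v)
    (x : ℕ) (v : T.V x) : v - f.app x (g.app x v) ∈ LinearMap.ker (g.app x) := by
  rw [LinearMap.mem_ker, map_sub, hgf, sub_self]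

/-- The projection of `T` onto the kernel of `g` along the image of a section `f` of `g`. -/
def Hom.toKer (f : A.Hom T) (g : T.Hom A) (hgf : ∀ x v, g.app x (f.app x v) = v) :
    T.Hom (ker g) where
  app x := LinearMap.codRestrict (LinearMap.ker (g.app x))
    (LinearMap.id - (f.app x).comp (g.app x)) (sub_mem_ker f g hgf x)
  comm_fwd i v := Subtype.ext <| by
    change T.fwd i v - f.app (i + 1) (g.app (i + 1) (T.fwd i v)) =
      T.fwd i (v - f.app i (g.app i v))
    rw [map_sub, g.comm_fwd, f.comm_fwd]
  comm_bwd i v := Subtype.ext <| by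
    change T.bwd i v - f.app i (g.app i (T.bwd i v)) =
      T.bwd i (v - f.app (i + 1) (g.app (i + 1) v))
    rw [map_sub, g.comm_bwd, f.comm_bwd]

theorem iso_dsum_ker (f : A.Hom T) (g : T.Hom A) (hgf : ∀ x v, g.app x (f.app x v) = v) :
    T.Iso (A.dsum (ker g)) := by
  refine ⟨g.pair (f.toKer g hgf), fun x => ⟨fun v w hvw => ?_, fun ⟨a, b, hb⟩ => ?_⟩⟩
  · have hg : g.app x v = g.app x w := congrArg Prod.fst hvw
    have hker : v - f.app x (g.app x v) = w - f.app x (g.app x w) :=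
      congrArg Subtype.val (congrArg Prod.snd hvw)
    rw [hg] at hker
    exact sub_left_injective hker
  · rw [LinearMap.mem_ker] at hb
    have hg : g.app x (f.app x a + b) = a := by rw [map_add, hgf, hb, add_zero]
    refine ⟨f.app x a + b, Prod.ext hg (Subtype.ext ?_)⟩
    change (f.app x a + b) - f.app x (g.app x (f.app x a + b)) = b
    rw [hg, add_sub_cancel_left]

theorem isSummand_iff : A.IsSummand T ↔ A.IsRetract T := by
  constructor
  · rintro ⟨B, hB⟩
    exact (isRetract_inl A B).trans hB.symm.isRetract
  · rintro ⟨f, g, hgf⟩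
    exact ⟨ker g, iso_dsum_ker f g hgf⟩

theorem IsSummand.trans_isRetract (hA : A.IsSummand T) (hT : T.IsRetract T') : A.IsSummand T' :=
  isSummand_iff.2 ((isSummand_iff.1 hA).trans hT)

theorem Indec.congr (h : A.Iso B) (hA : A.Indec) : B.Indec := by
  obtain ⟨f, hf⟩ := id h
  refine ⟨fun hzero => hA.1 fun x v => (hf x).1 ?_, fun C D hCD => hA.2 C D (h.trans hCD)⟩
  rw [hzero x (f.app x v), map_zero]

theorem isRetract_dsumList_of_sublist {L₁ L₂ : List (ARep k n ε)} (h : L₁.Sublist L₂) :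
    (dsumList k n ε L₁).IsRetract (dsumList k n ε L₂) := by
  induction h with
  | slnil => exact (Iso.refl _).isRetract
  | cons M _ ih => exact ih.trans (isRetract_inr M _)
  | cons_cons M _ ih => exact (Iso.refl M).isRetract.dsum ih

theorem isRetract_dsumList_of_mem {L : List (ARep k n ε)} (h : A ∈ L) :
    A.IsRetract (dsumList k n ε L) :=
  (isRetract_inl A _).trans
    (isRetract_dsumList_of_sublist (L₁ := [A]) (List.singleton_sublist.2 h))

end ARep

section Compatible

variable {k : Type} [Field k] {n : ℕ} {ε : ℕ → Bool} {A B A' B' T T' : ARep k n ε}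

/-- The condition on an ordered pair of indecomposable summands of an almost rigid
representation. -/
def Compatible (A B : ARep k n ε) : Prop := ExtZero A B ∨ ExtOneDimIndecMid A B

/-- The transport of a short exact sequence along isomorphisms of its ends. -/
def SES.transport (σ : SES B A) (β : B'.Hom B) (hβ : ∀ x, Function.Bijective (β.app x))
    (α : A.Hom A') (hα : ∀ x, Function.Bijective (α.app x)) : SES B' A' where
  E := σ.E
  ι := σ.ι.comp β
  π := α.comp σ.π
  inj x := (σ.inj x).comp (hβ x).1
  surj x := (hα x).2.comp (σ.surj x)
  exct x v := by
    simp only [ARep.Hom.comp_app, map_eq_zero_iff _ (hα x).1, σ.exct]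
    exact (hβ x).2.exists

theorem SES.transport_splits_iff {σ : SES B A} {β : B'.Hom B}
    {hβ : ∀ x, Function.Bijective (β.app x)} {α : A.Hom A'}
    {hα : ∀ x, Function.Bijective (α.app x)} :
    (σ.transport β hβ α hα).Splits ↔ σ.Splits := by
  constructor
  · rintro ⟨r, hr⟩
    refine ⟨β.comp r, fun x v => ?_⟩
    obtain ⟨w, rfl⟩ := (hβ x).2 v
    exact congrArg (β.app x) (hr x w)
  · rintro ⟨r, hr⟩
    exact ⟨(β.inverse hβ).comp r, fun x v =>
      (congrArg ((β.inverse hβ).app x) (hr x (β.app x v))).trans (β.inverse_apply_apply hβ x v)⟩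

theorem Compatible.congr (hA : A.Iso A') (hB : B.Iso B') (h : Compatible A B) :
    Compatible A' B' := by
  obtain ⟨α, hα⟩ := hA
  obtain ⟨β, hβ⟩ := hB
  have hα' := α.inverse_bijective hα
  have hβ' := β.inverse_bijective hβ
  rcases h with h | ⟨σ, hσ, hE, hgen⟩
  · exact .inl fun σ => SES.transport_splits_iff.1 (h (σ.transport β hβ (α.inverse hα) hα'))
  refine .inr ⟨σ.transport (β.inverse hβ) hβ' α hα, mt SES.transport_splits_iff.1 hσ, hE,
    fun τ hτ => ?_⟩
  obtain ⟨c, hc, φ, hφ, hφι, hφπ⟩ :=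
    hgen (τ.transport β hβ (α.inverse hα) hα') (mt SES.transport_splits_iff.1 hτ)
  refine ⟨c, hc, φ, hφ, fun x v => ?_, fun x v => ?_⟩
  · exact (hφι x ((β.inverse hβ).app x v)).trans
      (congrArg (τ.ι.app x) (β.apply_inverse_apply hβ x v))
  · exact (α.apply_inverse_apply hα x _).symm.trans
      ((congrArg (α.app x) (hφπ x v)).trans (map_smul (α.app x) c (σ.π.app x v)))

theorem AlmostRigid.of_isRetract (h : T.IsRetract T') (hT' : AlmostRigid T') : AlmostRigid T :=
  ⟨fun A hA hAT => hT'.1 A hA (hAT.trans_isRetract h), fun A B hA hB hAT hBT =>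
    hT'.2 A B hA hB (hAT.trans_isRetract h) (hBT.trans_isRetract h)⟩

theorem MaxAlmostRigid.congr (h : T.Iso T') (hT : MaxAlmostRigid T) : MaxAlmostRigid T' :=
  ⟨hT.1.of_isRetract h.symm.isRetract,
    fun M hM hT' => hT.2 M hM (hT'.of_isRetract (h.isRetract.dsum (ARep.Iso.refl M).isRetract))⟩

end Compatible

/-! ### Linked vectors -/

section IntervalRep

variable {k : Type} [Field k] {n : ℕ} {ε : ℕ → Bool} {M N : ARep k n ε} {ℓ x : ℕ}

namespace ARep

/-- A vector at `ℓ` and a vector at `ℓ + 1` are linked when the arrow between these vertices maps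
one to the other; this treats both orientations of the arrow at once. -/
def Linked (M : ARep k n ε) (ℓ : ℕ) (v : M.V ℓ) (w : M.V (ℓ + 1)) : Prop :=
  (ε ℓ = true → M.fwd ℓ v = w) ∧ (ε ℓ = false → M.bwd ℓ w = v)

theorem linked_iff_of_true (h : ε ℓ = true) {v : M.V ℓ} {w : M.V (ℓ + 1)} :
    M.Linked ℓ v w ↔ M.fwd ℓ v = w := by
  simp [Linked, h]

theorem linked_iff_of_false (h : ε ℓ = false) {v : M.V ℓ} {w : M.V (ℓ + 1)} :
    M.Linked ℓ v w ↔ M.bwd ℓ w = v := by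
  simp [Linked, h]

theorem Linked.smul {v : M.V ℓ} {w : M.V (ℓ + 1)} (h : M.Linked ℓ v w) (c : k) :
    M.Linked ℓ (c • v) (c • w) :=
  ⟨fun hε => by rw [map_smul, h.1 hε], fun hε => by rw [map_smul, h.2 hε]⟩

theorem linked_zero : M.Linked ℓ 0 0 := ⟨fun _ => map_zero _, fun _ => map_zero _⟩

theorem Hom.map_linked (f : M.Hom N) {v : M.V ℓ} {w : M.V (ℓ + 1)} (h : M.Linked ℓ v w) :
    N.Linked ℓ (f.app ℓ v) (f.app (ℓ + 1) w) :=
  ⟨fun hε => by rw [← f.comm_fwd, h.1 hε], fun hε => by rw [← f.comm_bwd, h.2 hε]⟩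

/-- A family of linear maps that preserves linked vectors is a morphism. -/
def Hom.ofLinked (app : ∀ x, M.V x →ₗ[k] N.V x)
    (h : ∀ ℓ v w, M.Linked ℓ v w → N.Linked ℓ (app ℓ v) (app (ℓ + 1) w)) : M.Hom N where
  app := app
  comm_fwd ℓ v := by
    cases hε : ε ℓ
    · simp only [M.fwd_zero ℓ hε, N.fwd_zero ℓ hε, LinearMap.zero_apply, map_zero]
    · exact ((linked_iff_of_true hε).1 (h ℓ v _ ((linked_iff_of_true hε).2 rfl))).symm
  comm_bwd ℓ w := by
    cases hε : ε ℓ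
    · exact ((linked_iff_of_false hε).1 (h ℓ _ w ((linked_iff_of_false hε).2 rfl))).symm
    · simp only [M.bwd_zero ℓ hε, N.bwd_zero ℓ hε, LinearMap.zero_apply, map_zero]

end ARep

/-- The source of the arrow between `ℓ` and `ℓ + 1`. -/
def arrowSrc (ε : ℕ → Bool) (ℓ : ℕ) : ℕ := if ε ℓ = true then ℓ else ℓ + 1

/-- The target of the arrow between `ℓ` and `ℓ + 1`. -/
def arrowTgt (ε : ℕ → Bool) (ℓ : ℕ) : ℕ := if ε ℓ = true then ℓ + 1 else ℓ

theorem arrowSrc_of_true (h : ε ℓ = true) : arrowSrc ε ℓ = ℓ := if_pos h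

theorem arrowSrc_of_false (h : ε ℓ = false) : arrowSrc ε ℓ = ℓ + 1 := by simp [arrowSrc, h]

theorem arrowTgt_of_true (h : ε ℓ = true) : arrowTgt ε ℓ = ℓ + 1 := if_pos h

theorem arrowTgt_of_false (h : ε ℓ = false) : arrowTgt ε ℓ = ℓ := by simp [arrowTgt, h]

/-! ### Interval representations -/

/-- The support of the interval representation attached to the chord `e`. -/
def InSupp (n : ℕ) (e : ℕ × ℕ) (x : ℕ) : Prop := SuppCond n (e.1 + 1) e.2 x

theorem inSupp_iff {e : ℕ × ℕ} : InSupp n e x ↔ e.1 < x ∧ x ≤ e.2 ∧ x ≤ n + 2 := by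
  simp only [InSupp, SuppCond]
  omega

/-- The interval representation attached to the chord `e` of the polygon; it is supported on the
vertices `x` with `e.1 < x ≤ e.2`. -/
def chordRep (k : Type) [Field k] (n : ℕ) (ε : ℕ → Bool) (e : ℕ × ℕ) : ARep k n ε :=
  intervalRep k n ε (e.1 + 1) e.2

theorem coe_fiber_eq_zero {P : Prop} (hP : ¬P) (v : fiber k P) : (v : k) = 0 :=
  (Submodule.mem_bot k).1 ((if_neg hP : fiber k P = ⊥) ▸ v.2)

theorem mem_fiber {P : Prop} (hP : P) (a : k) : a ∈ fiber k P :=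
  (Submodule.eq_top_iff'.1 (if_pos hP : fiber k P = ⊤)) a

theorem coe_fiberMap {P Q : Prop} (v : fiber k P) :
    (fiberMap k P Q v : k) = if Q then (v : k) else 0 := by
  by_cases hP : P <;> by_cases hQ : Q <;> simp [fiberMap, hP, hQ, coe_fiber_eq_zero]

variable {e f g : ℕ × ℕ}

/-- The coordinate of a vector of an interval representation. -/
def coord (e : ℕ × ℕ) (x : ℕ) : (chordRep k n ε e).V x →ₗ[k] k :=
  (fiber k (SuppCond n (e.1 + 1) e.2 x)).subtype

theorem coord_injective : Function.Injective (coord (k := k) (n := n) (ε := ε) e x) :=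
  Subtype.val_injective

theorem coord_eq_zero (hx : ¬InSupp n e x) (v : (chordRep k n ε e).V x) : coord e x v = 0 :=
  coe_fiber_eq_zero hx v

/-- The vector with coordinate `1` at a vertex of the support, and `0` elsewhere. -/
def gen (e : ℕ × ℕ) (x : ℕ) : (chordRep k n ε e).V x :=
  if h : InSupp n e x then ⟨1, mem_fiber h 1⟩ else 0

theorem gen_eq_zero (hx : ¬InSupp n e x) : (gen e x : (chordRep k n ε e).V x) = 0 := dif_neg hx

theorem coord_gen (hx : InSupp n e x) :
    coord e x (gen e x : (chordRep k n ε e).V x) = 1 := by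
  have hgen : (gen e x : (chordRep k n ε e).V x) = ⟨1, mem_fiber hx 1⟩ := dif_pos hx
  rw [hgen]
  rfl

theorem coord_smul_gen (v : (chordRep k n ε e).V x) : coord e x v • gen e x = v := by
  refine coord_injective ?_
  by_cases hx : InSupp n e x
  · rw [map_smul, coord_gen hx, smul_eq_mul, mul_one]
  · rw [coord_eq_zero hx, coord_eq_zero hx]

theorem linked_chordRep_iff {v : (chordRep k n ε e).V ℓ} {w : (chordRep k n ε e).V (ℓ + 1)} :
    (chordRep k n ε e).Linked ℓ v w ↔
      (InSupp n e (arrowTgt ε ℓ) → coord e ℓ v = coord e (ℓ + 1) w) := by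
  cases hε : ε ℓ
  · have hmap : coord e ℓ ((chordRep k n ε e).bwd ℓ w) =
        if InSupp n e ℓ then coord e (ℓ + 1) w else 0 := by
      have hbwd : (chordRep k n ε e).bwd ℓ = fiberMap k _ _ := if_neg (by simp [hε])
      rw [hbwd]
      exact coe_fiberMap w
    rw [ARep.linked_iff_of_false hε, ← coord_injective.eq_iff, hmap,
      arrowTgt_of_false hε]
    by_cases h : InSupp n e ℓ <;> simp [h, eq_comm, coord_eq_zero]
  · have hmap : coord e (ℓ + 1) ((chordRep k n ε e).fwd ℓ v) =
        if InSupp n e (ℓ + 1) then coord e ℓ v else 0 := by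
      have hfwd : (chordRep k n ε e).fwd ℓ = fiberMap k _ _ := if_pos hε
      rw [hfwd]
      exact coe_fiberMap v
    rw [ARep.linked_iff_of_true hε, ← coord_injective.eq_iff, hmap,
      arrowTgt_of_true hε]
    by_cases h : InSupp n e (ℓ + 1) <;> simp [h, coord_eq_zero]

namespace ARep

theorem coord_smul_gen_eq (c : k) (hc : ¬InSupp n e x → c = 0) :
    coord e x (c • gen e x : (chordRep k n ε e).V x) = c := by
  by_cases hx : InSupp n e x
  · rw [map_smul, coord_gen hx, smul_eq_mul, mul_one]
  · rw [coord_eq_zero hx, hc hx]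

/-- The morphism to an interval representation with prescribed coordinates. -/
def Hom.toChord (e : ℕ × ℕ) (Φ : ∀ x, M.V x →ₗ[k] k) (h0 : ∀ x, ¬InSupp n e x → ∀ v, Φ x v = 0)
    (h : ∀ ℓ v w, M.Linked ℓ v w → InSupp n e (arrowTgt ε ℓ) → Φ ℓ v = Φ (ℓ + 1) w) :
    M.Hom (chordRep k n ε e) :=
  .ofLinked (fun x => (Φ x).smulRight (gen e x)) fun ℓ v w hvw =>
    linked_chordRep_iff.2 fun htgt => by
      rw [LinearMap.smulRight_apply, LinearMap.smulRight_apply,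
        coord_smul_gen_eq _ fun hx => h0 _ hx v, coord_smul_gen_eq _ fun hx => h0 _ hx w]
      exact h ℓ v w hvw htgt

theorem Hom.coord_toChord {Φ : ∀ x, M.V x →ₗ[k] k} (h0 : ∀ x, ¬InSupp n e x → ∀ v, Φ x v = 0)
    (h : ∀ ℓ v w, M.Linked ℓ v w → InSupp n e (arrowTgt ε ℓ) → Φ ℓ v = Φ (ℓ + 1) w) (v : M.V x) :
    coord e x ((Hom.toChord e Φ h0 h).app x v) = Φ x v :=
  coord_smul_gen_eq _ fun hx => h0 x hx v

/-- The morphism from an interval representation that maps the generators to given vectors. -/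
def Hom.fromChord (e : ℕ × ℕ) (u : ∀ x, M.V x) (h0 : ∀ x, ¬InSupp n e x → u x = 0)
    (h : ∀ ℓ, InSupp n e (arrowSrc ε ℓ) → M.Linked ℓ (u ℓ) (u (ℓ + 1))) :
    (chordRep k n ε e).Hom M :=
  .ofLinked (fun x => (coord e x).smulRight (u x)) fun ℓ v w hvw => by
    rw [linked_chordRep_iff] at hvw
    simp only [LinearMap.smulRight_apply]
    have hℓ := h ℓ
    cases hε : ε ℓ
    · rw [arrowTgt_of_false hε] at hvw
      rw [arrowSrc_of_false hε] at hℓ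
      have htgt : coord e ℓ v • u ℓ = coord e (ℓ + 1) w • u ℓ := by
        by_cases hx : InSupp n e ℓ
        · rw [hvw hx]
        · rw [h0 _ hx, smul_zero, smul_zero]
      rw [htgt]
      by_cases hx : InSupp n e (ℓ + 1)
      · exact (hℓ hx).smul _
      · rw [coord_eq_zero hx, zero_smul, zero_smul]
        exact linked_zero
    · rw [arrowTgt_of_true hε] at hvw
      rw [arrowSrc_of_true hε] at hℓ
      have htgt : coord e (ℓ + 1) w • u (ℓ + 1) = coord e ℓ v • u (ℓ + 1) := by
        by_cases hx : InSupp n e (ℓ + 1)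
        · rw [hvw hx]
        · rw [h0 _ hx, smul_zero, smul_zero]
      rw [htgt]
      by_cases hx : InSupp n e ℓ
      · exact (hℓ hx).smul _
      · rw [coord_eq_zero hx, zero_smul, zero_smul]
        exact linked_zero

end ARep

end IntervalRep

/-! ### Splitting off interval representations -/

theorem exists_chain {X : ℕ → Type*} [∀ i, Nonempty (X i)] {R : ∀ i, X i → X (i + 1) → Prop}
    {P : ℕ → ∀ i, X i → Prop} (hP : ∀ d i v, P (d + 1) i v → ∃ w, R i v w ∧ P d (i + 1) w)
    (d i : ℕ) (v : X i) (hv : P d i v) :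
    ∃ u : ∀ i, X i, u i = v ∧ (∀ ℓ, i ≤ ℓ → ℓ < i + d → R ℓ (u ℓ) (u (ℓ + 1))) ∧
      P 0 (i + d) (u (i + d)) := by
  induction d generalizing i with
  | zero =>
    refine ⟨Function.update (fun _ => Classical.arbitrary _) i v, Function.update_self .., ?_, ?_⟩
    · omega
    · simpa only [Nat.add_zero, Function.update_self] using hv
  | succ d ih =>
    obtain ⟨w, hR, hw⟩ := hP d i v hv
    obtain ⟨u, rfl, hu, hlast⟩ := ih (i + 1) w hw
    refine ⟨Function.update u i v, Function.update_self .., fun ℓ hiℓ hℓ => ?_, ?_⟩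
    · obtain rfl | hne := eq_or_ne ℓ i
      · rwa [Function.update_self, Function.update_of_ne (by omega)]
      · rw [Function.update_of_ne hne, Function.update_of_ne (by omega)]
        exact hu ℓ (by omega) (by omega)
    · rw [Function.update_of_ne (by omega)]
      rwa [Nat.add_right_comm, Nat.add_assoc] at hlast

namespace ARep

variable {k : Type} [Field k] {n : ℕ} {ε : ℕ → Bool} {M N : ARep k n ε} {e : ℕ × ℕ} {i d : ℕ}

theorem chordRep_isRetract (u : ∀ x, M.V x) (Φ : ∀ x, M.V x →ₗ[k] k)
    (hu0 : ∀ x, ¬InSupp n e x → u x = 0)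
    (hu : ∀ ℓ, InSupp n e (arrowSrc ε ℓ) → M.Linked ℓ (u ℓ) (u (ℓ + 1)))
    (hΦ0 : ∀ x, ¬InSupp n e x → ∀ v, Φ x v = 0)
    (hΦ : ∀ ℓ v w, M.Linked ℓ v w → InSupp n e (arrowTgt ε ℓ) → Φ ℓ v = Φ (ℓ + 1) w)
    (hΦu : ∀ x, InSupp n e x → Φ x (u x) = 1) : (chordRep k n ε e).IsRetract M := by
  refine ⟨Hom.fromChord e u hu0 hu, Hom.toChord e Φ hΦ0 hΦ, fun x v => coord_injective ?_⟩
  rw [Hom.coord_toChord]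
  change Φ x (coord e x v • u x) = coord e x v
  by_cases hx : InSupp n e x
  · rw [map_smul, hΦu x hx, smul_eq_mul, mul_one]
  · rw [coord_eq_zero hx, zero_smul, map_zero]

/-- The vectors at `i` that are joined by a chain of `d` links to a vector of `W (i + d)`. -/
def pullback (M : ARep k n ε) (W : ∀ i, Submodule k (M.V i)) : ℕ → ∀ i, Submodule k (M.V i)
  | 0, i => W i
  | d + 1, i =>
    if ε i = true then (M.pullback W d (i + 1)).comap (M.fwd i)
    else (M.pullback W d (i + 1)).map (M.bwd i)

variable {W W' : ∀ i, Submodule k (M.V i)}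

theorem pullback_succ_of_true (h : ε i = true) :
    M.pullback W (d + 1) i = (M.pullback W d (i + 1)).comap (M.fwd i) := if_pos h

theorem pullback_succ_of_false (h : ε i = false) :
    M.pullback W (d + 1) i = (M.pullback W d (i + 1)).map (M.bwd i) := if_neg (by simp [h])

theorem exists_linked_of_mem_pullback {v : M.V i} (hv : v ∈ M.pullback W (d + 1) i) :
    ∃ w, M.Linked i v w ∧ w ∈ M.pullback W d (i + 1) := by
  cases h : ε i
  · rw [pullback_succ_of_false h] at hv
    obtain ⟨w, hw, hwv⟩ := hv
    exact ⟨w, (linked_iff_of_false h).2 hwv, hw⟩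
  · rw [pullback_succ_of_true h] at hv
    exact ⟨M.fwd i v, (linked_iff_of_true h).2 rfl, hv⟩

theorem exists_dual_linked_of_pullback {φ : M.V i →ₗ[k] k}
    (hφ : M.pullback W (d + 1) i ≤ LinearMap.ker φ) :
    ∃ ψ : M.V (i + 1) →ₗ[k] k, (∀ v w, M.Linked i v w → φ v = ψ w) ∧
      M.pullback W d (i + 1) ≤ LinearMap.ker ψ := by
  cases h : ε i
  · rw [pullback_succ_of_false h] at hφ
    refine ⟨φ.comp (M.bwd i), fun v w hvw => ?_, fun w hw => hφ (Submodule.mem_map_of_mem hw)⟩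
    rw [LinearMap.comp_apply, (linked_iff_of_false h).1 hvw]
  · rw [pullback_succ_of_true h] at hφ
    let q := (M.pullback W d (i + 1)).mkQ
    have hker : φ ∈ (LinearMap.ker (q.comp (M.fwd i))).dualAnnihilator := by
      refine (Submodule.mem_dualAnnihilator φ).2 fun v hv => hφ ?_
      exact (Submodule.Quotient.mk_eq_zero (M.pullback W d (i + 1))).1 hv
    rw [← LinearMap.range_dualMap_eq_dualAnnihilator_ker] at hker
    obtain ⟨ψ, rfl⟩ := hker
    refine ⟨ψ.comp q, fun v w hvw => ?_, fun w hw => ?_⟩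
    · rw [← (linked_iff_of_true h).1 hvw]
      rfl
    · exact (congrArg ψ ((Submodule.Quotient.mk_eq_zero _).2 hw)).trans (map_zero ψ)

theorem pullback_congr (h : W (i + d) = W' (i + d)) : M.pullback W d i = M.pullback W' d i := by
  induction d generalizing i with
  | zero => exact h
  | succ d ih =>
    have hd := ih (i := i + 1) (by rwa [Nat.add_right_comm, Nat.add_assoc])
    simp only [pullback, hd]

theorem pullback_mono (h : ∀ i, W i ≤ W' i) (d i : ℕ) : M.pullback W d i ≤ M.pullback W' d i := by
  induction d generalizing i with
  | zero => exact h i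
  | succ d ih =>
    simp only [pullback]
    split_ifs
    · exact Submodule.comap_mono (ih _)
    · exact Submodule.map_mono (ih _)

theorem pullback_succ (W : ∀ i, Submodule k (M.V i)) (d i : ℕ) :
    M.pullback W (d + 1) i = M.pullback (M.pullback W 1) d i := by
  induction d generalizing i with
  | zero => rfl
  | succ d ih =>
    rw [pullback, ih]
    rfl

theorem arrowSrc_mem_Ioc {a j ℓ : ℕ} (h : a < arrowSrc ε ℓ ∧ arrowSrc ε ℓ ≤ j) :
    (a < ℓ ∧ ℓ < j) ∨ (ℓ = a ∧ ε ℓ = false) ∨ (ℓ = j ∧ ε ℓ = true) := by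
  grind [arrowSrc]

theorem arrowTgt_mem_Ioc {a j ℓ : ℕ} (h : a < arrowTgt ε ℓ ∧ arrowTgt ε ℓ ≤ j) :
    (a < ℓ ∧ ℓ < j) ∨ (ℓ = a ∧ ε ℓ = true) ∨ (ℓ = j ∧ ε ℓ = false) := by
  grind [arrowTgt]

theorem exists_isRetract_of_chain {a j : ℕ} (haj : a < j) (u : ∀ x, M.V x)
    (Φ : ∀ x, M.V x →ₗ[k] k) (hu : ∀ ℓ, a < ℓ → ℓ < j → M.Linked ℓ (u ℓ) (u (ℓ + 1)))
    (hΦ : ∀ ℓ, a < ℓ → ℓ < j → ∀ v w, M.Linked ℓ v w → Φ ℓ v = Φ (ℓ + 1) w)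
    (ha : ∀ v : M.V a, v = 0) (hj : M.fwd j (u j) = 0) (hj' : ∀ w, Φ j (M.bwd j w) = 0)
    (hΦu : Φ (a + 1) (u (a + 1)) = 1) :
    ∃ e, ValidPair n e ∧ (chordRep k n ε e).IsRetract M := by
  have hone (x : ℕ) (hax : a < x) (hxj : x ≤ j) : Φ x (u x) = 1 := by
    induction x, hax using Nat.le_induction with
    | base => exact hΦu
    | succ x hax ih => rw [← hΦ x hax hxj _ _ (hu x hax hxj), ih (by omega)]
  have hjn : j ≤ n + 2 := by
    by_contra hlt
    simpa [M.triv j (.inr (not_le.1 hlt)) (u j)] using hone j haj le_rfl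
  have hsupp (x : ℕ) : InSupp n (a, j) x ↔ a < x ∧ x ≤ j := by
    rw [inSupp_iff]
    omega
  refine ⟨(a, j), ⟨haj, hjn⟩, chordRep_isRetract (fun x => if a < x ∧ x ≤ j then u x else 0)
    (fun x => if a < x ∧ x ≤ j then Φ x else 0) (fun x hx => if_neg (mt (hsupp x).2 hx))
    (fun ℓ hℓ => ?_) (fun x hx v => ?_) (fun ℓ v w hvw hℓ => ?_) fun x hx => ?_⟩
  · have hℓ' := arrowSrc_mem_Ioc ((hsupp _).1 hℓ)
    rcases hℓ' with ⟨haℓ, hℓj⟩ | ⟨rfl, hε⟩ | ⟨rfl, hε⟩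
    · rw [if_pos (by omega), if_pos (by omega)]
      exact hu ℓ haℓ hℓj
    · rw [if_neg (by omega), linked_iff_of_false hε]
      exact ha _
    · rw [if_pos (by omega), if_neg (by omega), linked_iff_of_true hε, hj]
  · simp only [if_neg (mt (hsupp x).2 hx), LinearMap.zero_apply]
  · have hℓ' := arrowTgt_mem_Ioc ((hsupp _).1 hℓ)
    rcases hℓ' with ⟨haℓ, hℓj⟩ | ⟨rfl, hε⟩ | ⟨rfl, hε⟩
    · rw [if_pos (by omega), if_pos (by omega)]
      exact hΦ ℓ haℓ hℓj v w hvw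
    · rw [← (linked_iff_of_true hε).1 hvw, ha v, map_zero, map_zero, map_zero]
    · rw [← (linked_iff_of_false hε).1 hvw, if_pos (by omega), if_neg (by omega), hj',
        LinearMap.zero_apply]
  · have hx' := (hsupp x).1 hx
    simp only [hx', and_self, if_true, hone x hx'.1 hx'.2]

theorem exists_isRetract_of_not_le {a : ℕ} (ha : ∀ v : M.V a, v = 0)
    (hW : ∀ v ∈ W (a + 1 + d), M.fwd (a + 1 + d) v = 0)
    (hW' : ∀ w, M.bwd (a + 1 + d) w ∈ W' (a + 1 + d))
    (h : ¬M.pullback W d (a + 1) ≤ M.pullback W' d (a + 1)) :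
    ∃ e, ValidPair n e ∧ (chordRep k n ε e).IsRetract M := by
  obtain ⟨v, hv, hv'⟩ := SetLike.not_le_iff_exists.1 h
  obtain ⟨φ, hφv, hφ⟩ : ∃ φ : M.V (a + 1) →ₗ[k] k,
      φ v = 1 ∧ M.pullback W' d (a + 1) ≤ LinearMap.ker φ := by
    obtain ⟨φ, hφv, hφ⟩ := Submodule.exists_le_ker_of_notMem hv'
    refine ⟨(φ v)⁻¹ • φ, inv_mul_cancel₀ hφv, fun w hw => ?_⟩
    rw [LinearMap.mem_ker, LinearMap.smul_apply, LinearMap.mem_ker.1 (hφ hw), smul_zero]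
  obtain ⟨u, rfl, hu, hud⟩ := exists_chain (X := M.V) (R := M.Linked)
    (P := fun d i v => v ∈ M.pullback W d i) (fun _ _ _ => exists_linked_of_mem_pullback) _ _ v hv
  obtain ⟨Φ, rfl, hΦ, hΦd⟩ := exists_chain (X := fun i => M.V i →ₗ[k] k)
    (R := fun i φ ψ => ∀ v w, M.Linked i v w → φ v = ψ w)
    (P := fun d i φ => M.pullback W' d i ≤ LinearMap.ker φ)
    (fun _ _ _ => exists_dual_linked_of_pullback) _ _ φ hφ
  exact exists_isRetract_of_chain (by omega) u Φ hu hΦ ha (hW _ hud) (fun w => hΦd (hW' w)) hφv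

theorem exists_ne_and_succ_eq {α : Type*} {f g : ℕ → α} (h0 : f 0 ≠ g 0) {m : ℕ}
    (hm : f m = g m) : ∃ d, f d ≠ g d ∧ f (d + 1) = g (d + 1) := by
  by_contra! h
  exact Nat.rec h0 h m hm

theorem exists_isRetract_of_pullback_bot_ne_top {a : ℕ} (ha : ∀ v : M.V a, v = 0)
    (hne : M.pullback (fun _ => ⊥) d (a + 1) ≠ M.pullback (fun _ => ⊤) d (a + 1))
    (heq : M.pullback (fun _ => ⊥) (d + 1) (a + 1) = M.pullback (fun _ => ⊤) (d + 1) (a + 1)) :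
    ∃ e, ValidPair n e ∧ (chordRep k n ε e).IsRetract M := by
  have hlt := (pullback_mono (M := M) (fun _ => bot_le) d (a + 1)).lt_of_ne hne
  simp only [pullback_succ] at heq
  cases hε : ε (a + 1 + d)
  · refine exists_isRetract_of_not_le ha (W := fun _ => ⊤) (W' := M.pullback (fun _ => ⊤) 1)
      (fun v _ => by rw [M.fwd_zero _ hε, LinearMap.zero_apply]) (fun w => ?_) ?_
    · rw [pullback_succ_of_false hε]
      exact Submodule.mem_map_of_mem Submodule.mem_top
    · rw [← heq, pullback_congr (W := M.pullback (fun _ => ⊥) 1) (W' := fun _ => ⊥)]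
      · exact hlt.not_ge
      · rw [pullback_succ_of_false hε]
        exact Submodule.map_bot _
  · refine exists_isRetract_of_not_le ha (W := M.pullback (fun _ => ⊥) 1) (W' := fun _ => ⊥)
      (fun v hv => ?_) (fun w => by rw [M.bwd_zero _ hε]; exact Submodule.zero_mem _) ?_
    · rw [pullback_succ_of_true hε] at hv
      exact hv
    · rw [heq, pullback_congr (W := M.pullback (fun _ => ⊤) 1) (W' := fun _ => ⊤)]
      · exact hlt.not_ge
      · rw [pullback_succ_of_true hε]
        exact Submodule.comap_top _

/-- The filtrations `pullback ⊥` and `pullback ⊤` of the first nonzero space start apart and end up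
equal; an interval representation splits off where they meet. -/
theorem exists_chordRep_isRetract (hM : ¬M.IsZero) :
    ∃ e, ValidPair n e ∧ (chordRep k n ε e).IsRetract M := by
  have hne : ∃ x, ∃ v : M.V x, v ≠ 0 := by
    simpa only [IsZero, not_forall] using hM
  obtain ⟨a, ha⟩ : ∃ a, Nat.find hne = a + 1 := Nat.exists_eq_succ_of_ne_zero fun h0 => by
    obtain ⟨v, hv⟩ := Nat.find_spec hne
    exact hv (M.triv _ (.inl h0) v)
  have hVa (v : M.V a) : v = 0 := by
    by_contra hv
    exact Nat.find_min hne (m := a) (by omega) ⟨v, hv⟩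
  obtain ⟨v, hv⟩ : ∃ v : M.V (a + 1), v ≠ 0 := ha ▸ Nat.find_spec hne
  have hstart : (⊥ : Submodule k (M.V (a + 1))) ≠ ⊤ := fun h =>
    hv ((Submodule.mem_bot k).1 (h ▸ Submodule.mem_top))
  have hend : M.pullback (fun _ => ⊥) (n + 2) (a + 1) = M.pullback (fun _ => ⊤) (n + 2) (a + 1) :=
    pullback_congr (Submodule.ext fun w => by
      simp [M.triv (a + 1 + (n + 2)) (.inr (by omega)) w])
  obtain ⟨d, hd, hd'⟩ := exists_ne_and_succ_eq (f := fun d => M.pullback (fun _ => ⊥) d (a + 1))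
    (g := fun d => M.pullback (fun _ => ⊤) d (a + 1)) hstart hend
  exact exists_isRetract_of_pullback_bot_ne_top hVa hd hd'

theorem chordRep_not_isZero (he : ValidPair n e) : ¬(chordRep k n ε e).IsZero := by
  intro h
  have hgen := coord_gen (k := k) (ε := ε) (inSupp_iff.2 ⟨he.1, le_rfl, he.2⟩)
  rw [h e.2 (gen e e.2), map_zero] at hgen
  exact zero_ne_one hgen

/-- The total dimension of a representation. -/
def totalDim (M : ARep k n ε) : ℕ := ∑ x ∈ Finset.range (n + 3), Module.finrank k (M.V x)

theorem Iso.totalDim_eq (h : M.Iso N) : M.totalDim = N.totalDim := by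
  obtain ⟨f, hf⟩ := h
  exact Finset.sum_congr rfl fun x _ => (LinearEquiv.ofBijective (f.app x) (hf x)).finrank_eq

theorem totalDim_dsum (M N : ARep k n ε) : (M.dsum N).totalDim = M.totalDim + N.totalDim := by
  rw [totalDim, totalDim, totalDim, ← Finset.sum_add_distrib]
  exact Finset.sum_congr rfl fun x _ => Module.finrank_prod

theorem totalDim_pos (hM : ¬M.IsZero) : 0 < M.totalDim := by
  rw [Nat.pos_iff_ne_zero]
  refine fun h => hM fun x => ?_
  by_cases hx : x < n + 3
  · have hfin := Finset.sum_eq_zero_iff.1 h x (Finset.mem_range.2 hx)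
    exact fun v => (Module.finrank_zero_iff.1 hfin).elim v 0
  · exact M.triv x (.inr (by omega))

theorem IsRetract.totalDim_le (h : M.IsRetract N) : M.totalDim ≤ N.totalDim := by
  obtain ⟨B, hB⟩ := isSummand_iff.2 h
  rw [hB.totalDim_eq, totalDim_dsum]
  exact Nat.le_add_right _ _

theorem IsZero.iso (hM : M.IsZero) (hN : N.IsZero) : M.Iso N :=
  ⟨Hom.zero M N, fun x => ⟨fun v w _ => (hM x v).trans (hM x w).symm,
    fun v => ⟨0, (hN x _).trans (hN x v).symm⟩⟩⟩

theorem zeroRep_isZero : (zeroRep k n ε).IsZero := fun _ v =>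
  Subtype.ext (coe_fiber_eq_zero id v)

theorem exists_iso_dsumList (M : ARep k n ε) :
    ∃ L : List (ℕ × ℕ), (∀ e ∈ L, ValidPair n e) ∧
      M.Iso (dsumList k n ε (L.map (chordRep k n ε))) := by
  induction h : M.totalDim using Nat.strong_induction_on generalizing M with
  | _ m ih =>
    by_cases hM : M.IsZero
    · exact ⟨[], by simp, hM.iso zeroRep_isZero⟩
    obtain ⟨e, he, hret⟩ := exists_chordRep_isRetract hM
    obtain ⟨B, hB⟩ := isSummand_iff.2 hret
    have hlt : B.totalDim < m := by
      have := totalDim_pos (chordRep_not_isZero (k := k) (ε := ε) he)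
      rw [← h, hB.totalDim_eq, totalDim_dsum]
      omega
    obtain ⟨L, hL, hBL⟩ := ih _ hlt B rfl
    exact ⟨e :: L, List.forall_mem_cons.2 ⟨he, hL⟩, hB.trans ((Iso.refl _).dsum hBL)⟩

end ARep

/-! ### Indecomposable representations -/

section Indecomposable

variable {k : Type} [Field k] {n : ℕ} {ε : ℕ → Bool} {ℓ x : ℕ} {e f : ℕ × ℕ}

theorem linked_gen (h : InSupp n e (arrowTgt ε ℓ) → InSupp n e ℓ ∧ InSupp n e (ℓ + 1)) :
    (chordRep k n ε e).Linked ℓ (gen e ℓ) (gen e (ℓ + 1)) :=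
  linked_chordRep_iff.2 fun htgt => by rw [coord_gen (h htgt).1, coord_gen (h htgt).2]

namespace ARep

variable {A B C D M N : ARep k n ε}

theorem exists_forall_eq_smul (h : (chordRep k n ε e).Hom (chordRep k n ε e)) :
    ∃ c : k, ∀ x v, h.app x v = c • v := by
  refine ⟨coord e (e.1 + 1) (h.app _ (gen e (e.1 + 1))), fun x v => coord_injective ?_⟩
  by_cases hx : InSupp n e x
  swap
  · rw [coord_eq_zero hx, coord_eq_zero hx]
  have hgen : coord e x (h.app x (gen e x)) = coord e (e.1 + 1) (h.app _ (gen e (e.1 + 1))) := by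
    obtain ⟨h1, h2⟩ := inSupp_iff.1 hx
    induction x, h1 using Nat.le_induction with
    | base => rfl
    | succ ℓ hℓ ih =>
      have hℓ' : InSupp n e ℓ := inSupp_iff.2 (by omega)
      rw [← ih 0 hℓ' (by omega)]
      refine (linked_chordRep_iff.1 (h.map_linked (linked_gen fun _ => ⟨hℓ', hx⟩)) ?_).symm
      grind [arrowTgt]
  rw [map_smul, smul_eq_mul, mul_comm, ← hgen, ← smul_eq_mul, ← map_smul, ← map_smul,
    coord_smul_gen]

theorem indec_of_forall_hom_eq_smul (hM : ¬M.IsZero)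
    (h : ∀ φ : M.Hom M, ∃ c : k, ∀ x v, φ.app x v = c • v) : M.Indec := by
  refine ⟨hM, fun A B ⟨f, hf⟩ => ?_⟩
  obtain ⟨c, hc⟩ := h ((f.inverse hf).comp ((Hom.inl A B).comp ((Hom.fst A B).comp f)))
  have hproj (x : ℕ) (w : (A.dsum B).V x) :
      (Hom.inl A B).app x ((Hom.fst A B).app x w) = c • w := by
    have hw := congrArg (f.app x) (hc x ((f.inverse hf).app x w))
    simpa only [Hom.comp_app, Hom.apply_inverse_apply, map_smul] using hw
  have hfst (x : ℕ) (a : A.V x) : a = c • a := congrArg Prod.fst (hproj x (a, 0))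
  have hsnd (x : ℕ) (b : B.V x) : 0 = c • b := congrArg Prod.snd (hproj x (0, b))
  by_cases hc0 : c = 0
  · exact .inl fun x a => by rw [hfst x a, hc0, zero_smul]
  · exact .inr fun x b => (smul_eq_zero_iff_right hc0).1 (hsnd x b).symm

theorem chordRep_indec (he : ValidPair n e) : (chordRep k n ε e).Indec :=
  indec_of_forall_hom_eq_smul (chordRep_not_isZero he) exists_forall_eq_smul

theorem IsZero.dsum_iso (hB : B.IsZero) : (A.dsum B).Iso A :=
  ⟨Hom.fst A B, fun x => ⟨fun v w hvw => Prod.ext hvw ((hB x v.2).trans (hB x w.2).symm),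
    fun a => ⟨(a, 0), rfl⟩⟩⟩

theorem Indec.exists_iso_chordRep (hA : A.Indec) :
    ∃ e, ValidPair n e ∧ A.Iso (chordRep k n ε e) := by
  obtain ⟨e, he, hret⟩ := exists_chordRep_isRetract hA.1
  obtain ⟨B, hB⟩ := isSummand_iff.2 hret
  have hzero := (hA.2 _ B hB).resolve_left (chordRep_not_isZero he)
  exact ⟨e, he, hB.trans hzero.dsum_iso⟩

/-- Every composition `C → A → D` vanishes. -/
def ZeroThrough (A C D : ARep k n ε) : Prop :=
  ∀ (p : C.Hom A) (q : A.Hom D) x v, q.app x (p.app x v) = 0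

theorem ZeroThrough.dsum_self (h : ZeroThrough A C C) : ZeroThrough A (C.dsum C) (C.dsum C) := by
  intro p q x v
  have hsplit : v = (Hom.inl C C).app x v.1 + (Hom.inr C C).app x v.2 :=
    Prod.ext (add_zero v.1).symm (zero_add v.2).symm
  have hcomp (r : (C.dsum C).Hom C) : r.app x (q.app x (p.app x v)) = 0 := by
    rw [hsplit, map_add, map_add, map_add]
    exact (congrArg₂ _ (h (p.comp (Hom.inl C C)) (r.comp q) x v.1)
      (h (p.comp (Hom.inr C C)) (r.comp q) x v.2)).trans (add_zero _)
  exact Prod.ext (hcomp (Hom.fst C C)) (hcomp (Hom.snd C C))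

theorem ZeroThrough.dsum (hA : ZeroThrough A C D) (hB : ZeroThrough B C D) :
    ZeroThrough (A.dsum B) C D := by
  intro p q x v
  have hsplit (w : (A.dsum B).V x) : w = (Hom.inl A B).app x w.1 + (Hom.inr A B).app x w.2 :=
    Prod.ext (add_zero w.1).symm (zero_add w.2).symm
  rw [hsplit (p.app x v), map_add]
  exact (congrArg₂ _ (hA ((Hom.fst A B).comp p) (q.comp (Hom.inl A B)) x v)
    (hB ((Hom.snd A B).comp p) (q.comp (Hom.inr A B)) x v)).trans (add_zero _)

theorem zeroThrough_zeroRep : ZeroThrough (zeroRep k n ε) C D := fun p q x v => by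
  rw [zeroRep_isZero x (p.app x v), map_zero]

theorem zeroThrough_dsumList {L : List (ℕ × ℕ)}
    (h : ∀ f ∈ L, ZeroThrough (chordRep k n ε f) C D) :
    ZeroThrough (dsumList k n ε (L.map (chordRep k n ε))) C D := by
  induction L with
  | nil => exact zeroThrough_zeroRep
  | cons f L ih =>
    obtain ⟨hf, hL⟩ := List.forall_mem_cons.1 h
    exact hf.dsum (ih hL)

theorem IsRetract.of_dsum_left (h : C.IsRetract (A.dsum B)) (hB : ZeroThrough B C C) :
    C.IsRetract A := by
  obtain ⟨p, q, hqp⟩ := h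
  refine ⟨(Hom.fst A B).comp p, q.comp (Hom.inl A B), fun x v => ?_⟩
  have hsplit : p.app x v = (Hom.inl A B).app x (p.app x v).1 + (Hom.inr A B).app x (p.app x v).2 :=
    Prod.ext (add_zero _).symm (zero_add _).symm
  have hv := hqp x v
  rw [hsplit, map_add] at hv
  exact (add_zero _).symm.trans ((congrArg _
    (hB ((Hom.snd A B).comp p) (q.comp (Hom.inr A B)) x v).symm).trans hv)

theorem IsRetract.of_dsum_right (h : C.IsRetract (A.dsum B)) (hA : ZeroThrough A C C) :
    C.IsRetract B :=
  (h.trans (dsum_comm A B).isRetract).of_dsum_left hA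

theorem coord_comp_gen (p : (chordRep k n ε e).Hom (chordRep k n ε f))
    (q : (chordRep k n ε f).Hom (chordRep k n ε e)) :
    coord e x (q.app x (p.app x (gen e x))) =
      coord f x (p.app x (gen e x)) * coord e x (q.app x (gen f x)) := by
  conv_lhs => rw [← coord_smul_gen (p.app x (gen e x)), map_smul, map_smul, smul_eq_mul]

theorem coord_comp_gen_eq_zero_of_arrow (p : (chordRep k n ε e).Hom (chordRep k n ε f))
    (q : (chordRep k n ε f).Hom (chordRep k n ε e)) (hf : InSupp n f ℓ) (hf' : InSupp n f (ℓ + 1))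
    (he : ¬(InSupp n e ℓ ↔ InSupp n e (ℓ + 1))) (hx : x = ℓ ∨ x = ℓ + 1) :
    coord e x (q.app x (p.app x (gen e x))) = 0 := by
  rw [coord_comp_gen]
  by_cases htgt : InSupp n e (arrowTgt ε ℓ)
  · have hq := linked_chordRep_iff.1 (q.map_linked (linked_gen (e := f) fun _ => ⟨hf, hf'⟩)) htgt
    have hq0 : coord e ℓ (q.app ℓ (gen f ℓ)) = 0 := by
      by_cases hℓ : InSupp n e ℓ
      · rw [hq, coord_eq_zero fun h => he (iff_of_true hℓ h)]
      · exact coord_eq_zero hℓ _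
    rcases hx with rfl | rfl
    · rw [hq0, mul_zero]
    · rw [← hq, hq0, mul_zero]
  · have hp := linked_chordRep_iff.1 (p.map_linked (linked_gen (ε := ε) fun h => (htgt h).elim))
      (by grind [arrowTgt])
    have hp0 : coord f ℓ (p.app ℓ (gen e ℓ)) = 0 := by
      by_cases hℓ : InSupp n e ℓ
      · rw [hp, gen_eq_zero fun h => he (iff_of_true hℓ h), map_zero, map_zero]
      · rw [gen_eq_zero hℓ, map_zero, map_zero]
    rcases hx with rfl | rfl
    · rw [hp0, zero_mul]
    · rw [← hp, hp0, zero_mul]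

theorem exists_not_inSupp_iff (he : ValidPair n e) (hf : f.2 ≤ n + 2) (hef : e ≠ f)
    (h : ∀ x, InSupp n e x → InSupp n f x) :
    ∃ ℓ x, InSupp n f ℓ ∧ InSupp n f (ℓ + 1) ∧ ¬(InSupp n e ℓ ↔ InSupp n e (ℓ + 1)) ∧
      InSupp n e x ∧ (x = ℓ ∨ x = ℓ + 1) := by
  simp only [inSupp_iff] at h ⊢
  obtain ⟨he, he'⟩ := he
  have h1 := h (e.1 + 1) (by omega)
  have h2 := h e.2 (by omega)
  rw [Ne, Prod.ext_iff, not_and_or] at hef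
  by_cases hef1 : e.1 = f.1
  · exact ⟨e.2, e.2, by omega⟩
  · exact ⟨e.1, e.1 + 1, by omega⟩

theorem zeroThrough_of_ne (he : ValidPair n e) (hf : f.2 ≤ n + 2) (hef : e ≠ f) :
    ZeroThrough (chordRep k n ε f) (chordRep k n ε e) (chordRep k n ε e) := by
  intro p q
  obtain ⟨c, hc⟩ := exists_forall_eq_smul (q.comp p)
  have hcoord (x : ℕ) (hx : InSupp n e x) : coord e x (q.app x (p.app x (gen e x))) = c := by
    rw [← Hom.comp_app, hc, map_smul, coord_gen hx, smul_eq_mul, mul_one]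
  suffices hc0 : c = 0 from fun x v => by rw [← Hom.comp_app, hc, hc0, zero_smul]
  by_cases hsub : ∀ x, InSupp n e x → InSupp n f x
  · obtain ⟨ℓ, x, hℓ, hℓ', hiff, hx, hxℓ⟩ := exists_not_inSupp_iff he hf hef hsub
    rw [← hcoord x hx, coord_comp_gen_eq_zero_of_arrow p q hℓ hℓ' hiff hxℓ]
  · obtain ⟨x, hx, hx'⟩ : ∃ x, InSupp n e x ∧ ¬InSupp n f x := by
      simpa only [not_forall, exists_prop] using hsub
    rw [← hcoord x hx, coord_comp_gen, coord_eq_zero hx', zero_mul]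

theorem isRetract_dsumList_iff_mem {L : List (ℕ × ℕ)} (hL : ∀ f ∈ L, ValidPair n f)
    (he : ValidPair n e) :
    (chordRep k n ε e).IsRetract (dsumList k n ε (L.map (chordRep k n ε))) ↔ e ∈ L := by
  refine ⟨fun h => ?_, fun h => isRetract_dsumList_of_mem (List.mem_map_of_mem h)⟩
  by_contra hmem
  obtain ⟨p, q, hqp⟩ := h
  refine chordRep_not_isZero (k := k) (ε := ε) he fun x v => ?_
  rw [← hqp x v]
  exact zeroThrough_dsumList (fun f hf =>
    zeroThrough_of_ne he (hL f hf).2 fun hef => hmem (hef ▸ hf)) p q x v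

theorem not_isRetract_dsum_self {L : List (ℕ × ℕ)} (hL : ∀ f ∈ L, ValidPair n f) (hnd : L.Nodup)
    (he : ValidPair n e) : ¬((chordRep k n ε e).dsum (chordRep k n ε e)).IsRetract
      (dsumList k n ε (L.map (chordRep k n ε))) := by
  have hzero {f : ℕ × ℕ} (hf : f.2 ≤ n + 2) (hef : e ≠ f) :=
    (zeroThrough_of_ne (k := k) (ε := ε) he hf hef).dsum_self
  have hdim := totalDim_pos (chordRep_not_isZero (k := k) (ε := ε) he)
  intro h
  induction L with
  | nil =>
    exact List.not_mem_nil ((isRetract_dsumList_iff_mem hL he).1 ((isRetract_inl _ _).trans h))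
  | cons f L ih =>
    obtain ⟨hf, hL'⟩ := List.forall_mem_cons.1 hL
    obtain ⟨hfL, hnd'⟩ := List.nodup_cons.1 hnd
    obtain rfl | hef := eq_or_ne e f
    · have hle := (h.of_dsum_left (zeroThrough_dsumList fun f' hf' =>
        hzero (hL' f' hf').2 fun hef => hfL (hef ▸ hf'))).totalDim_le
      rw [totalDim_dsum] at hle
      omega
    · exact ih hL' hnd' (h.of_dsum_right (hzero hf.2 hef))

end ARep
end Indecomposable

/-! ### Cocycles of extensions of interval representations -/

section Cocycle

variable {k : Type} [Field k] {n : ℕ} {ε : ℕ → Bool} {e f : ℕ × ℕ} {ℓ x : ℕ}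

/-- The arrow between `ℓ` and `ℓ + 1` carries a scalar of the cocycles describing the extensions
`0 → M(f) → E → M(e) → 0`: its source supports `M(e)` and its target supports `M(f)`. -/
def Carries (n : ℕ) (ε : ℕ → Bool) (e f : ℕ × ℕ) (ℓ : ℕ) : Prop :=
  InSupp n e (arrowSrc ε ℓ) ∧ InSupp n f (arrowTgt ε ℓ)

theorem Carries.mem_Icc (h : Carries n ε e f ℓ) : max e.1 f.1 ≤ ℓ ∧ ℓ ≤ min e.2 f.2 := by
  grind [Carries, inSupp_iff, arrowSrc, arrowTgt]

theorem exists_eq_smul_of_ker_le {V : Type*} [AddCommGroup V] [Module k V] {φ ψ : V →ₗ[k] k}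
    (h : LinearMap.ker φ ≤ LinearMap.ker ψ) : ∃ c : k, ∀ v, ψ v = c * φ v := by
  have hψ : ψ ∈ (LinearMap.ker φ).dualAnnihilator :=
    (Submodule.mem_dualAnnihilator ψ).2 fun v hv => h hv
  rw [← LinearMap.range_dualMap_eq_dualAnnihilator_ker] at hψ
  obtain ⟨χ, rfl⟩ := hψ
  refine ⟨χ 1, fun v => ?_⟩
  rw [LinearMap.dualMap_apply, mul_comm, ← smul_eq_mul, ← map_smul, smul_eq_mul, mul_one]

/-- The coordinate in `M(e)` of the image under `π` of the vector at the source of the arrow, for a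
pair of vectors at `ℓ` and `ℓ + 1`. -/
def srcCoord {M : ARep k n ε} (π : M.Hom (chordRep k n ε e)) (ℓ : ℕ) (v : M.V ℓ)
    (w : M.V (ℓ + 1)) : k :=
  if ε ℓ = true then coord e ℓ (π.app ℓ v) else coord e (ℓ + 1) (π.app (ℓ + 1) w)

theorem srcCoord_eq_zero {M : ARep k n ε} (π : M.Hom (chordRep k n ε e))
    (h : ¬InSupp n e (arrowSrc ε ℓ)) (v : M.V ℓ) (w : M.V (ℓ + 1)) : srcCoord π ℓ v w = 0 := by
  rw [srcCoord]
  split_ifs with hε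
  · exact coord_eq_zero (arrowSrc_of_true hε ▸ h) _
  · exact coord_eq_zero (arrowSrc_of_false (Bool.eq_false_iff.2 hε) ▸ h) _

theorem mul_coord_sub_mul_coord {M : ARep k n ε} (π : M.Hom (chordRep k n ε e)) {h : ℕ → k}
    (h0 : ∀ x, ¬InSupp n e x → h x = 0) {v : M.V ℓ} {w : M.V (ℓ + 1)} (hvw : M.Linked ℓ v w) :
    h ℓ * coord e ℓ (π.app ℓ v) - h (ℓ + 1) * coord e (ℓ + 1) (π.app (ℓ + 1) w) =
      (h ℓ - h (ℓ + 1)) * srcCoord π ℓ v w := by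
  have hP := linked_chordRep_iff.1 (π.map_linked hvw)
  rw [srcCoord]
  cases hε : ε ℓ
  · rw [arrowTgt_of_false hε] at hP
    by_cases hx : InSupp n e ℓ
    · simp [hP hx, sub_mul]
    · simp [h0 ℓ hx]
  · rw [arrowTgt_of_true hε] at hP
    by_cases hx : InSupp n e (ℓ + 1)
    · simp [hP hx, sub_mul]
    · simp [h0 (ℓ + 1) hx]

/-- A description of an extension `0 → M(f) → E → M(e) → 0` by scalars on the arrows: `retr`
consists of retractions of `M(f) → E` at the vertices, and `scal` measures their failure to commute
with the arrows. -/
structure SES.Cocycle (τ : SES (chordRep k n ε f) (chordRep k n ε e)) where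
  retr : ∀ x, τ.E.V x →ₗ[k] k
  scal : ℕ → k
  retr_ι : ∀ x v, retr x (τ.ι.app x v) = coord f x v
  retr_eq_zero : ∀ x, ¬InSupp n f x → ∀ v, retr x v = 0
  scal_eq_zero : ∀ ℓ, ¬InSupp n f (arrowTgt ε ℓ) → scal ℓ = 0
  retr_sub : ∀ ℓ v w, τ.E.Linked ℓ v w → (InSupp n f (arrowSrc ε ℓ) → InSupp n f (arrowTgt ε ℓ)) →
    retr (ℓ + 1) w - retr ℓ v = scal ℓ * srcCoord τ.π ℓ v w

theorem SES.exists_ι_eq (τ : SES (chordRep k n ε f) (chordRep k n ε e)) {v : τ.E.V x}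
    (hv : coord e x (τ.π.app x v) = 0) : ∃ b, τ.ι.app x b = v :=
  (τ.exct x v).1 (coord_injective (hv.trans (map_zero _).symm))

theorem SES.exists_scal (τ : SES (chordRep k n ε f) (chordRep k n ε e))
    {ρ : ∀ x, τ.E.V x →ₗ[k] k} (hρ : ∀ x v, ρ x (τ.ι.app x v) = coord f x v)
    (htgt : InSupp n f (arrowTgt ε ℓ)) :
    ∃ c, ∀ v w, τ.E.Linked ℓ v w → ρ (ℓ + 1) w - ρ ℓ v = c * srcCoord τ.π ℓ v w := by
  cases hε : ε ℓ
  · obtain ⟨c, hc⟩ := exists_eq_smul_of_ker_le (φ := (coord e (ℓ + 1)).comp (τ.π.app (ℓ + 1)))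
      (ψ := ρ (ℓ + 1) - (ρ ℓ).comp (τ.E.bwd ℓ)) fun w hw => by
        obtain ⟨b, rfl⟩ := τ.exists_ι_eq hw
        have hb : coord f ℓ ((chordRep k n ε f).bwd ℓ b) = coord f (ℓ + 1) b :=
          linked_chordRep_iff.1 ((ARep.linked_iff_of_false hε).2 rfl) htgt
        rw [LinearMap.mem_ker, LinearMap.sub_apply, LinearMap.comp_apply, ← τ.ι.comm_bwd, hρ, hρ,
          hb, sub_self]
    refine ⟨c, fun v w hvw => ?_⟩
    rw [← (ARep.linked_iff_of_false hε).1 hvw]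
    simpa [srcCoord, hε] using hc w
  · obtain ⟨c, hc⟩ := exists_eq_smul_of_ker_le (φ := (coord e ℓ).comp (τ.π.app ℓ))
      (ψ := (ρ (ℓ + 1)).comp (τ.E.fwd ℓ) - ρ ℓ) fun v hv => by
        obtain ⟨b, rfl⟩ := τ.exists_ι_eq hv
        have hb : coord f ℓ b = coord f (ℓ + 1) ((chordRep k n ε f).fwd ℓ b) :=
          linked_chordRep_iff.1 ((ARep.linked_iff_of_true hε).2 rfl) htgt
        rw [LinearMap.mem_ker, LinearMap.sub_apply, LinearMap.comp_apply, ← τ.ι.comm_fwd, hρ, hρ,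
          hb, sub_self]
    refine ⟨c, fun v w hvw => ?_⟩
    rw [← (ARep.linked_iff_of_true hε).1 hvw]
    simpa [srcCoord, hε] using hc v

theorem SES.nonempty_cocycle (τ : SES (chordRep k n ε f) (chordRep k n ε e)) :
    Nonempty τ.Cocycle := by
  choose r hr using fun x =>
    LinearMap.exists_leftInverse_of_injective (τ.ι.app x) (LinearMap.ker_eq_bot.2 (τ.inj x))
  have hρ (x : ℕ) (v : (chordRep k n ε f).V x) :
      ((coord f x).comp (r x)) (τ.ι.app x v) = coord f x v :=
    congrArg (coord f x) (LinearMap.congr_fun (hr x) v)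
  have hρ0 (x : ℕ) (hx : ¬InSupp n f x) (v : τ.E.V x) : ((coord f x).comp (r x)) v = 0 :=
    coord_eq_zero hx _
  choose θ hθ using fun ℓ => τ.exists_scal (ℓ := ℓ) hρ
  refine ⟨fun x => (coord f x).comp (r x),
    fun ℓ => if h : InSupp n f (arrowTgt ε ℓ) then θ ℓ h else 0, hρ, hρ0,
    fun ℓ hℓ => dif_neg hℓ, fun ℓ v w hvw hℓ => ?_⟩
  by_cases htgt : InSupp n f (arrowTgt ε ℓ)
  · rw [dif_pos htgt]
    exact hθ ℓ htgt v w hvw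
  · have hoff : ¬InSupp n f ℓ ∧ ¬InSupp n f (ℓ + 1) := by
      have hsrc : ¬InSupp n f (arrowSrc ε ℓ) := mt hℓ htgt
      rw [arrowSrc] at hsrc
      grind [arrowTgt]
    rw [dif_neg htgt, hρ0 _ hoff.1, hρ0 _ hoff.2, sub_zero, zero_mul]

variable {u : ℕ × ℕ} {τ : SES (chordRep k n ε f) (chordRep k n ε e)}

theorem SES.Cocycle.exists_hom (c : τ.Cocycle) (hfu : ∀ x, InSupp n f x → InSupp n u x)
    (hclosed : ∀ ℓ, InSupp n f (arrowSrc ε ℓ) → InSupp n u (arrowTgt ε ℓ) →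
      InSupp n f (arrowTgt ε ℓ))
    {h : ℕ → k} (h0 : ∀ x, ¬(InSupp n e x ∧ InSupp n u x) → h x = 0)
    (hscal : ∀ ℓ, InSupp n e (arrowSrc ε ℓ) → InSupp n u (arrowTgt ε ℓ) →
      c.scal ℓ = h ℓ - h (ℓ + 1)) :
    ∃ ψ : τ.E.Hom (chordRep k n ε u), ∀ x v,
      coord u x (ψ.app x v) = c.retr x v + h x * coord e x (τ.π.app x v) := by
  have hzero (x : ℕ) (hx : ¬InSupp n u x) (v : τ.E.V x) :
      (c.retr x + h x • (coord e x).comp (τ.π.app x)) v = 0 := by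
    simp [c.retr_eq_zero x (fun hf => hx (hfu x hf)), h0 x (fun hx' => hx hx'.2)]
  refine ⟨ARep.Hom.toChord u _ hzero fun ℓ v w hvw htgt => ?_,
    fun x v => ARep.Hom.coord_toChord hzero _ v⟩
  have hretr := c.retr_sub ℓ v w hvw fun hsrc => hclosed ℓ hsrc htgt
  have hpot := mul_coord_sub_mul_coord τ.π (fun x hx => h0 x fun hx' => hx hx'.1) hvw
  have hscal' : (c.scal ℓ - (h ℓ - h (ℓ + 1))) * srcCoord τ.π ℓ v w = 0 := by
    by_cases hsrc : InSupp n e (arrowSrc ε ℓ)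
    · rw [hscal ℓ hsrc htgt, sub_self, zero_mul]
    · rw [srcCoord_eq_zero τ.π hsrc, mul_zero]
  simp only [LinearMap.add_apply, LinearMap.smul_apply, LinearMap.comp_apply, smul_eq_mul]
  linear_combination hpot - hretr - hscal'

theorem SES.Cocycle.splits (c : τ.Cocycle) {h : ℕ → k}
    (h0 : ∀ x, ¬(InSupp n e x ∧ InSupp n f x) → h x = 0)
    (hscal : ∀ ℓ, Carries n ε e f ℓ → c.scal ℓ = h ℓ - h (ℓ + 1)) : τ.Splits := by
  obtain ⟨ψ, hψ⟩ := c.exists_hom (fun _ => id) (fun _ _ => id) h0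
    fun ℓ hsrc htgt => hscal ℓ ⟨hsrc, htgt⟩
  refine ⟨ψ, fun x v => coord_injective ?_⟩
  rw [hψ, (τ.exct x _).2 ⟨v, rfl⟩, map_zero, mul_zero, add_zero, c.retr_ι]

theorem exists_potential {A : Type*} [AddCommGroup A] (θ : ℕ → A) {m M : ℕ} {R : ℕ → Prop}
    (hR : ∀ ℓ, R ℓ → m ≤ ℓ ∧ ℓ ≤ M) (hmM : ¬R m ∨ ¬R M) :
    ∃ h : ℕ → A, (∀ x, ¬(m < x ∧ x ≤ M) → h x = 0) ∧ ∀ ℓ, R ℓ → θ ℓ = h ℓ - h (ℓ + 1) := by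
  rcases hmM with hm | hM
  · refine ⟨fun x => if m < x then ∑ i ∈ Finset.Ico x (M + 1), θ i else 0, fun x hx => ?_,
      fun ℓ hℓ => ?_⟩
    · beta_reduce
      split_ifs
      · exact Finset.sum_eq_zero fun i hi => by grind
      · rfl
    · have hmℓ : m < ℓ := (hR ℓ hℓ).1.lt_of_ne fun h => hm (h ▸ hℓ)
      beta_reduce
      rw [if_pos hmℓ, if_pos (by omega),
        Finset.sum_eq_sum_Ico_succ_bot (by grind) θ, add_sub_cancel_right]
  · refine ⟨fun x => if x ≤ M then -∑ i ∈ Finset.Ico m x, θ i else 0, fun x hx => ?_,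
      fun ℓ hℓ => ?_⟩
    · beta_reduce
      split_ifs
      · rw [Finset.sum_eq_zero fun i hi => by grind, neg_zero]
      · rfl
    · have hℓM : ℓ < M := (hR ℓ hℓ).2.lt_of_ne fun h => hM (h ▸ hℓ)
      beta_reduce
      rw [if_pos hℓM.le, if_pos (Nat.succ_le_of_lt hℓM), Finset.sum_Ico_succ_top (hR ℓ hℓ).1]
      abel

theorem extZero_of_not_carries (he : e.2 ≤ n + 2)
    (h : ¬Carries n ε e f (max e.1 f.1) ∨ ¬Carries n ε e f (min e.2 f.2)) :
    ExtZero (chordRep k n ε e) (chordRep k n ε f) := by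
  intro τ
  obtain ⟨c⟩ := τ.nonempty_cocycle
  obtain ⟨p, hp0, hp⟩ := exists_potential c.scal (fun _ => Carries.mem_Icc) h
  exact c.splits (fun x hx => hp0 x fun hx' => hx (by grind [inSupp_iff])) hp

theorem overlap_iff_carries (he : ValidPair n e) (hf : ValidPair n f) :
    Overlap ε e f ↔ max e.1 f.1 < min e.2 f.2 ∧ Carries n ε e f (max e.1 f.1) ∧
      Carries n ε e f (min e.2 f.2) := by
  grind [Overlap, Carries, inSupp_iff, arrowSrc, arrowTgt, ValidPair]

end Cocycle

/-! ### Exchange sequences and gluing sequences -/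

section Extension

variable {k : Type} [Field k] {n : ℕ} {ε : ℕ → Bool} {e f u : ℕ × ℕ} {ℓ x : ℕ}

/-- The condition under which the identity on the common support of `M(e)` and `M(f)`, extended by
zero, is a morphism `M(e) → M(f)`. -/
def IsChordHom (n : ℕ) (ε : ℕ → Bool) (e f : ℕ × ℕ) : Prop :=
  ∀ ℓ, InSupp n e (arrowSrc ε ℓ) → InSupp n f (arrowTgt ε ℓ) →
    (InSupp n f (arrowSrc ε ℓ) ↔ InSupp n e (arrowTgt ε ℓ))

theorem IsChordHom.ite_coord_eq (hef : IsChordHom n ε e f) {v : (chordRep k n ε e).V ℓ}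
    {w : (chordRep k n ε e).V (ℓ + 1)} (hvw : (chordRep k n ε e).Linked ℓ v w)
    (htgt : InSupp n f (arrowTgt ε ℓ)) :
    (if InSupp n f ℓ then coord e ℓ v else 0) =
      if InSupp n f (ℓ + 1) then coord e (ℓ + 1) w else 0 := by
  have hlink := linked_chordRep_iff.1 hvw
  have hv : ¬InSupp n e ℓ → coord e ℓ v = 0 := fun h => coord_eq_zero h v
  have hw : ¬InSupp n e (ℓ + 1) → coord e (ℓ + 1) w = 0 := fun h => coord_eq_zero h w
  have hℓ := hef ℓ
  grind [arrowSrc, arrowTgt]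

/-- The morphism `M(e) → M(f)` that is the identity on the common support. -/
def chordHom (hef : IsChordHom n ε e f) : (chordRep k n ε e).Hom (chordRep k n ε f) :=
  .toChord f (fun x => if InSupp n f x then coord e x else 0)
    (fun x hx v => by rw [if_neg hx, LinearMap.zero_apply])
    fun ℓ v w hvw htgt => by
      convert hef.ite_coord_eq hvw htgt using 1 <;> split_ifs <;> rfl

theorem coord_chordHom (hef : IsChordHom n ε e f) (v : (chordRep k n ε e).V x) :
    coord f x ((chordHom hef).app x v) = if InSupp n f x then coord e x v else 0 := by
  rw [chordHom, ARep.Hom.coord_toChord]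
  split_ifs <;> rfl

theorem SES.not_splits_of_zeroThrough {A B : ARep k n ε} {σ : SES B A}
    (h : ARep.ZeroThrough σ.E B B) (hB : ¬B.IsZero) : ¬σ.Splits :=
  fun ⟨r, hr⟩ => hB fun x v => (hr x v).symm.trans (h σ.ι r x v)

/-- The supports of `M(g)` and `M(h)` arise from those of `M(e)` and `M(f)` by exchanging tails,
compatibly with the morphisms of an exact sequence `0 → M(f) → M(g) ⊕ M(h) → M(e) → 0`. -/
structure IsExchange (n : ℕ) (ε : ℕ → Bool) (e f g h : ℕ × ℕ) : Prop where
  hom_left : IsChordHom n ε f g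
  hom_right : IsChordHom n ε f h
  left_hom : IsChordHom n ε g e
  right_hom : IsChordHom n ε h e
  and_iff : ∀ x, InSupp n g x ∧ InSupp n h x ↔ InSupp n e x ∧ InSupp n f x
  or_iff : ∀ x, InSupp n g x ∨ InSupp n h x ↔ InSupp n e x ∨ InSupp n f x

namespace IsExchange

variable {g h : ℕ × ℕ} (H : IsExchange n ε e f g h)

/-- The inclusion of the exchange sequence. -/
def ι : (chordRep k n ε f).Hom ((chordRep k n ε g).dsum (chordRep k n ε h)) :=
  .pair (chordHom H.hom_left) (chordHom H.hom_right)

/-- The projection of the exchange sequence. -/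
def π : ((chordRep k n ε g).dsum (chordRep k n ε h)).Hom (chordRep k n ε e) :=
  ((chordHom H.left_hom).comp (.fst _ _)).add (((chordHom H.right_hom).comp (.snd _ _)).smul (-1))

theorem coord_fst_ι (v : (chordRep k n ε f).V x) :
    coord g x (H.ι.app x v).1 = if InSupp n g x then coord f x v else 0 :=
  coord_chordHom H.hom_left v

theorem coord_snd_ι (v : (chordRep k n ε f).V x) :
    coord h x (H.ι.app x v).2 = if InSupp n h x then coord f x v else 0 :=
  coord_chordHom H.hom_right v

theorem coord_π (v : (chordRep k n ε g).V x) (w : (chordRep k n ε h).V x) :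
    coord e x (H.π.app x (v, w)) = if InSupp n e x then coord g x v - coord h x w else 0 := by
  change coord e x ((chordHom H.left_hom).app x v + (-1 : k) • (chordHom H.right_hom).app x w) = _
  rw [map_add, map_smul, coord_chordHom, coord_chordHom]
  split_ifs <;> simp [sub_eq_add_neg]

theorem injective_ι : Function.Injective ((H.ι (k := k)).app x) := by
  refine (injective_iff_map_eq_zero _).2 fun v hv => coord_injective ?_
  have hfst := H.coord_fst_ι v
  have hsnd := H.coord_snd_ι v
  rw [hv] at hfst hsnd
  change coord g x 0 = _ at hfst
  change coord h x 0 = _ at hsnd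
  rw [map_zero] at hfst hsnd ⊢
  have hv0 : ¬InSupp n f x → coord f x v = 0 := fun hx => coord_eq_zero hx v
  have hor := H.or_iff x
  grind

theorem surjective_π : Function.Surjective ((H.π (k := k)).app x) := by
  intro v
  have hv0 : ¬InSupp n e x → coord e x v = 0 := fun hx => coord_eq_zero hx v
  have hor := H.or_iff x
  refine ⟨((if InSupp n g x then coord e x v else 0) • gen g x,
    (if InSupp n g x then 0 else -coord e x v) • gen h x), coord_injective ?_⟩
  rw [coord_π, ARep.coord_smul_gen_eq _ (by grind), ARep.coord_smul_gen_eq _ (by grind)]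
  grind

theorem π_eq_zero_iff (v : ((chordRep k n ε g).dsum (chordRep k n ε h)).V x) :
    H.π.app x v = 0 ↔ ∃ w, H.ι.app x w = v := by
  obtain ⟨v₁, v₂⟩ := v
  have hv₁ : ¬InSupp n g x → coord g x v₁ = 0 := fun hx => coord_eq_zero hx v₁
  have hv₂ : ¬InSupp n h x → coord h x v₂ = 0 := fun hx => coord_eq_zero hx v₂
  have hor := H.or_iff x
  have hand := H.and_iff x
  rw [← coord_injective.eq_iff, coord_π, map_zero]
  constructor
  · intro hv
    refine ⟨(if InSupp n g x then coord g x v₁ else coord h x v₂) • gen f x,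
      Prod.ext (coord_injective ?_) (coord_injective ?_)⟩
    · rw [coord_fst_ι, ARep.coord_smul_gen_eq _ (by grind)]
      grind
    · rw [coord_snd_ι, ARep.coord_smul_gen_eq _ (by grind)]
      grind
  · rintro ⟨w, hw⟩
    have hw0 : ¬InSupp n f x → coord f x w = 0 := fun hx => coord_eq_zero hx w
    have hfst := H.coord_fst_ι w
    have hsnd := H.coord_snd_ι w
    rw [hw] at hfst hsnd
    grind

/-- The exchange sequence `0 → M(f) → M(g) ⊕ M(h) → M(e) → 0`. -/
def ses : SES (chordRep k n ε f) (chordRep k n ε e) where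
  E := (chordRep k n ε g).dsum (chordRep k n ε h)
  ι := H.ι
  π := H.π
  inj _ := H.injective_ι
  surj _ := H.surjective_π
  exct _ := H.π_eq_zero_iff

end IsExchange

theorem Overlap.isExchange (he : ValidPair n e) (hf : ValidPair n f) (hef : Overlap ε e f) :
    IsExchange n ε e f (e.1, f.2) (f.1, e.2) := by
  constructor <;>
    grind [Overlap, IsChordHom, inSupp_iff, arrowSrc, arrowTgt, ValidPair]

/-- The support of `M(u)` is the disjoint union of those of `M(e)` and `M(f)`, with no arrow from
the latter to the former, so that `M(u)` is an extension of `M(e)` by `M(f)`. -/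
structure IsGluing (n : ℕ) (ε : ℕ → Bool) (e f u : ℕ × ℕ) : Prop where
  inSupp_iff : ∀ x, InSupp n u x ↔ InSupp n e x ∨ InSupp n f x
  disjoint : ∀ x, InSupp n e x → ¬InSupp n f x
  not_arrow : ∀ ℓ, InSupp n f (arrowSrc ε ℓ) → ¬InSupp n e (arrowTgt ε ℓ)

theorem IsGluing.isChordHom_left (H : IsGluing n ε e f u) : IsChordHom n ε f u := by
  grind [IsChordHom, IsGluing]

theorem IsGluing.isChordHom_right (H : IsGluing n ε e f u) : IsChordHom n ε u e := by
  grind [IsChordHom, IsGluing]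

/-- The gluing sequence `0 → M(f) → M(u) → M(e) → 0`. -/
def IsGluing.ses (H : IsGluing n ε e f u) : SES (chordRep k n ε f) (chordRep k n ε e) where
  E := chordRep k n ε u
  ι := chordHom H.isChordHom_left
  π := chordHom H.isChordHom_right
  inj x := by
    refine (injective_iff_map_eq_zero _).2 fun v hv => coord_injective ?_
    have hcoord := coord_chordHom H.isChordHom_left v
    rw [hv, map_zero] at hcoord
    have hv0 : ¬InSupp n f x → coord f x v = 0 := fun hx => coord_eq_zero hx v
    have hor := H.inSupp_iff x
    grind
  surj x v := by
    refine ⟨coord e x v • gen u x, coord_injective ?_⟩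
    have hv0 : ¬InSupp n e x → coord e x v = 0 := fun hx => coord_eq_zero hx v
    have hor := H.inSupp_iff x
    rw [coord_chordHom, ARep.coord_smul_gen_eq _ (by grind)]
    grind
  exct x v := by
    have hv0 : ¬InSupp n u x → coord u x v = 0 := fun hx => coord_eq_zero hx v
    have hor := H.inSupp_iff x
    have hdisj := H.disjoint x
    rw [← coord_injective.eq_iff, coord_chordHom, map_zero]
    constructor
    · intro hv
      refine ⟨coord u x v • gen f x, coord_injective ?_⟩
      rw [coord_chordHom, ARep.coord_smul_gen_eq _ (by grind)]
      grind
    · rintro ⟨w, rfl⟩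
      have hw0 : ¬InSupp n f x → coord f x w = 0 := fun hx => coord_eq_zero hx w
      rw [coord_chordHom]
      grind

end Extension

/-! ### Compatibility of interval representations -/

section Compatibility

variable {k : Type} [Field k] {n : ℕ} {ε : ℕ → Bool} {e f u : ℕ × ℕ} {a : ℕ}

theorem Overlap.not_compatible (he : ValidPair n e) (hf : ValidPair n f) (h : Overlap ε e f) :
    ¬Compatible (chordRep k n ε e) (chordRep k n ε f) := by
  have hg : ValidPair n (e.1, f.2) := by grind [Overlap, ValidPair]
  have hh : ValidPair n (f.1, e.2) := by grind [Overlap, ValidPair]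
  have hfg : f ≠ (e.1, f.2) := by grind [Overlap]
  have hfh : f ≠ (f.1, e.2) := by grind [Overlap]
  let σ : SES (chordRep k n ε f) (chordRep k n ε e) := (h.isExchange he hf).ses
  have hσ : ¬σ.Splits := SES.not_splits_of_zeroThrough
    ((ARep.zeroThrough_of_ne hf hg.2 hfg).dsum (ARep.zeroThrough_of_ne hf hh.2 hfh))
    (ARep.chordRep_not_isZero hf)
  rintro (hzero | ⟨τ, -, hτ, hgen⟩)
  · exact hσ (hzero σ)
  · obtain ⟨_, -, φ, hφ, -⟩ := hgen σ hσ
    exact (hτ.2 _ _ ⟨φ, hφ⟩).elim (ARep.chordRep_not_isZero hg) (ARep.chordRep_not_isZero hh)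

/-- The short five lemma, up to a scalar on the quotients. -/
theorem SES.bijective_of_comm {A B : ARep k n ε} {σ τ : SES B A} (ψ : τ.E.Hom σ.E)
    (hι : ∀ x v, ψ.app x (τ.ι.app x v) = σ.ι.app x v) {s : k} (hs : s ≠ 0)
    (hπ : ∀ x v, σ.π.app x (ψ.app x v) = s • τ.π.app x v) (x : ℕ) :
    Function.Bijective (ψ.app x) := by
  constructor
  · refine (injective_iff_map_eq_zero _).2 fun v hv => ?_
    have hπv : s • τ.π.app x v = 0 := by rw [← hπ, hv, map_zero]
    obtain ⟨b, rfl⟩ := (τ.exct x v).1 ((smul_eq_zero.1 hπv).resolve_left hs)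
    rw [hι] at hv
    rw [(injective_iff_map_eq_zero _).1 (σ.inj x) b hv, map_zero]
  · intro w
    obtain ⟨v, hv⟩ := τ.surj x (s⁻¹ • σ.π.app x w)
    obtain ⟨b, hb⟩ := (σ.exct x (w - ψ.app x v)).1 (by
      rw [map_sub, hπ, hv, smul_inv_smul₀ hs, sub_self])
    exact ⟨v + τ.ι.app x b, by rw [map_add, hι, hb, add_sub_cancel]⟩

theorem IsGluing.exists_hom_of_not_splits (H : IsGluing n ε e f u)
    (ha : ∀ ℓ, Carries n ε e f ℓ → ℓ = a) {τ : SES (chordRep k n ε f) (chordRep k n ε e)}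
    (hτ : ¬τ.Splits) :
    ∃ (ψ : τ.E.Hom (chordRep k n ε u)) (s : k), s ≠ 0 ∧
      (∀ x v, ψ.app x (τ.ι.app x v) = (chordHom H.isChordHom_left).app x v) ∧
      ∀ x v, (chordHom H.isChordHom_right).app x (ψ.app x v) = s • τ.π.app x v := by
  obtain ⟨c⟩ := τ.nonempty_cocycle
  have hs : c.scal a ≠ 0 := fun hs =>
    hτ (c.splits (h := 0) (fun _ _ => rfl) fun ℓ hℓ => by simp [ha ℓ hℓ, hs])
  set s : k := if ε a = true then c.scal a else -c.scal a with hs_def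
  obtain ⟨ψ, hψ⟩ := c.exists_hom (u := u) (fun x hx => (H.inSupp_iff x).2 (Or.inr hx))
    (fun ℓ hsrc htgt => ((H.inSupp_iff _).1 htgt).resolve_left (H.not_arrow ℓ hsrc))
    (h := fun x => if InSupp n e x then s else 0)
    (fun x hx => if_neg fun he => hx ⟨he, (H.inSupp_iff x).2 (Or.inl he)⟩)
    fun ℓ hsrc htgt => by
      rcases (H.inSupp_iff _).1 htgt with he | hf
      · rw [c.scal_eq_zero ℓ (H.disjoint _ he)]
        grind [arrowSrc, arrowTgt]
      · obtain rfl := ha ℓ ⟨hsrc, hf⟩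
        have he : ¬InSupp n e (arrowTgt ε ℓ) := fun he => H.disjoint _ he hf
        grind [arrowSrc, arrowTgt]
  refine ⟨ψ, s, by grind, fun x v => coord_injective ?_, fun x v => coord_injective ?_⟩
  · rw [hψ, (τ.exct x _).2 ⟨v, rfl⟩, map_zero, mul_zero, add_zero, c.retr_ι, coord_chordHom]
    have hv0 : ¬InSupp n f x → coord f x v = 0 := fun hx => coord_eq_zero hx v
    have hor := H.inSupp_iff x
    grind
  · rw [coord_chordHom, hψ, map_smul, smul_eq_mul]
    have hρ := c.retr_eq_zero x
    have hP : ¬InSupp n e x → coord e x (τ.π.app x v) = 0 := fun hx => coord_eq_zero hx _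
    have hdisj := H.disjoint x
    grind

theorem IsGluing.extOneDimIndecMid (H : IsGluing n ε e f u) (hf : ValidPair n f)
    (hu : ValidPair n u) (hfu : f ≠ u) (ha : ∀ ℓ, Carries n ε e f ℓ → ℓ = a) :
    ExtOneDimIndecMid (chordRep k n ε e) (chordRep k n ε f) := by
  refine ⟨H.ses, SES.not_splits_of_zeroThrough (ARep.zeroThrough_of_ne hf hu.2 hfu)
    (ARep.chordRep_not_isZero hf), ARep.chordRep_indec hu, fun τ hτ => ?_⟩
  obtain ⟨ψ, s, hs, hι, hπ⟩ := H.exists_hom_of_not_splits ha hτ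
  have hψ := SES.bijective_of_comm (σ := H.ses) ψ hι hs hπ
  refine ⟨s⁻¹, inv_ne_zero hs, ψ.inverse hψ, ψ.inverse_bijective hψ, fun x v => ?_, fun x v => ?_⟩
  · exact (congrArg _ (hι x v).symm).trans (ψ.inverse_apply_apply hψ x _)
  · rw [eq_inv_smul_iff₀ hs, ← hπ]
    exact congrArg _ (ψ.apply_inverse_apply hψ x v)

theorem isGluing_of_carries (he : ValidPair n e) (hf : ValidPair n f)
    (hmax : max e.1 f.1 = a) (hmin : min e.2 f.2 = a) (ha : Carries n ε e f a) :
    IsGluing n ε e f (min e.1 f.1, max e.2 f.2) := by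
  constructor <;> grind [Carries, inSupp_iff, arrowSrc, arrowTgt, ValidPair]

theorem compatible_iff_not_overlap (he : ValidPair n e) (hf : ValidPair n f) :
    Compatible (chordRep k n ε e) (chordRep k n ε f) ↔ ¬Overlap ε e f := by
  refine ⟨fun h hef => hef.not_compatible he hf h, fun h => ?_⟩
  by_cases hext : Carries n ε e f (max e.1 f.1) ∧ Carries n ε e f (min e.2 f.2)
  swap
  · exact Or.inl (extZero_of_not_carries he.2 (not_and_or.1 hext))
  have hle := hext.1.mem_Icc.2
  have heq : max e.1 f.1 = min e.2 f.2 := hle.antisymm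
    (not_lt.1 fun hlt => h ((overlap_iff_carries he hf).2 ⟨hlt, hext⟩))
  have hunique (ℓ : ℕ) (hℓ : Carries n ε e f ℓ) : ℓ = max e.1 f.1 :=
    (hℓ.mem_Icc.2.trans heq.ge).antisymm hℓ.mem_Icc.1
  exact Or.inr ((isGluing_of_carries he hf rfl heq.symm hext.1).extOneDimIndecMid hf
    (by grind [ValidPair]) (by grind [ValidPair]) hunique)

end Compatibility

/-! ### Maximal almost rigid representations -/

section MaxAlmostRigid

variable {k : Type} [Field k] {n : ℕ} {ε : ℕ → Bool} {e f : ℕ × ℕ} {L : List (ℕ × ℕ)}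

open ARep

theorem Overlap.irrefl (e : ℕ × ℕ) : ¬Overlap ε e e := by
  simp [Overlap]

theorem almostRigid_dsumList_iff (hL : ∀ e ∈ L, ValidPair n e) :
    AlmostRigid (dsumList k n ε (L.map (chordRep k n ε))) ↔
      L.Nodup ∧ ∀ e ∈ L, ∀ f ∈ L, ¬Overlap ε e f := by
  constructor
  · intro h
    refine ⟨List.nodup_iff_sublist.2 fun e hsub => ?_, fun e he f hf => ?_⟩
    · refine h.1 _ (chordRep_indec (hL e (hsub.subset List.mem_cons_self))) (isSummand_iff.2 ?_)
      exact ((Iso.refl _).isRetract.dsum (isRetract_inl _ _)).trans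
        (isRetract_dsumList_of_sublist (hsub.map (chordRep k n ε)))
    · refine (compatible_iff_not_overlap (k := k) (hL e he) (hL f hf)).1 ?_
      exact h.2 _ _ (chordRep_indec (hL e he)) (chordRep_indec (hL f hf))
        (isSummand_iff.2 ((isRetract_dsumList_iff_mem hL (hL e he)).2 he))
        (isSummand_iff.2 ((isRetract_dsumList_iff_mem hL (hL f hf)).2 hf))
  · rintro ⟨hnodup, hL'⟩
    refine ⟨fun A hA hAA => ?_, fun A B hA hB hAL hBL => ?_⟩
    · obtain ⟨e, he, hAe⟩ := hA.exists_iso_chordRep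
      exact not_isRetract_dsum_self hL hnodup he
        ((hAe.dsum hAe).symm.isRetract.trans (isSummand_iff.1 hAA))
    · obtain ⟨e, he, hAe⟩ := hA.exists_iso_chordRep
      obtain ⟨f, hf, hBf⟩ := hB.exists_iso_chordRep
      have heL := (isRetract_dsumList_iff_mem hL he).1
        (hAe.symm.isRetract.trans (isSummand_iff.1 hAL))
      have hfL := (isRetract_dsumList_iff_mem hL hf).1
        (hBf.symm.isRetract.trans (isSummand_iff.1 hBL))
      exact ((compatible_iff_not_overlap he hf).2 (hL' e heL f hfL)).congr hAe.symm hBf.symm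

theorem almostRigid_dsumList_cons_iff (hL : ∀ e ∈ L, ValidPair n e) (he : ValidPair n e)
    (hrigid : AlmostRigid (dsumList k n ε (L.map (chordRep k n ε)))) :
    AlmostRigid (dsumList k n ε ((e :: L).map (chordRep k n ε))) ↔
      e ∉ L ∧ ∀ f ∈ L, ¬(Overlap ε e f ∨ Overlap ε f e) := by
  obtain ⟨hnodup, hL'⟩ := (almostRigid_dsumList_iff hL).1 hrigid
  rw [almostRigid_dsumList_iff (List.forall_mem_cons.2 ⟨he, hL⟩), List.nodup_cons]
  simp only [List.forall_mem_cons, Overlap.irrefl e]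
  grind

theorem maxAlmostRigid_iff_forall_chordRep {T : ARep k n ε} : MaxAlmostRigid T ↔
    AlmostRigid T ∧ ∀ e, ValidPair n e → ¬AlmostRigid ((chordRep k n ε e).dsum T) := by
  refine and_congr_right fun _ => ⟨fun h e he hrigid => ?_, fun h M hM hrigid => ?_⟩
  · exact h _ (chordRep_not_isZero he) (hrigid.of_isRetract (dsum_comm _ _).isRetract)
  · obtain ⟨e, he, hret⟩ := exists_chordRep_isRetract hM
    exact h e he (hrigid.of_isRetract
      ((hret.dsum (Iso.refl T).isRetract).trans (dsum_comm _ _).isRetract))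

theorem maxAlmostRigid_dsumList_iff (hL : ∀ e ∈ L, ValidPair n e) :
    MaxAlmostRigid (dsumList k n ε (L.map (chordRep k n ε))) ↔
      L.Nodup ∧ IsMaximalNonoverlapping n ε L.toFinset := by
  rw [maxAlmostRigid_iff_forall_chordRep]
  constructor
  · rintro ⟨hrigid, hmax⟩
    obtain ⟨hnodup, hL'⟩ := (almostRigid_dsumList_iff hL).1 hrigid
    refine ⟨hnodup, ⟨?_, ?_, ?_⟩⟩ <;> simp only [List.mem_toFinset]
    · exact hL
    · exact fun e he f hf => not_or.2 ⟨hL' e he f hf, hL' f hf e he⟩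
    · intro e he hef
      by_contra hmem
      exact hmax e he ((almostRigid_dsumList_cons_iff hL he hrigid).2 ⟨hmem, hef⟩)
  · rintro ⟨hnodup, hS⟩
    have hrigid : AlmostRigid (dsumList k n ε (L.map (chordRep k n ε))) :=
      (almostRigid_dsumList_iff hL).2 ⟨hnodup, fun e he f hf => (not_or.1
        (hS.indep e (List.mem_toFinset.2 he) f (List.mem_toFinset.2 hf))).1⟩
    refine ⟨hrigid, fun e he hcons => ?_⟩
    obtain ⟨hmem, hef⟩ := (almostRigid_dsumList_cons_iff hL he hrigid).1 hcons
    exact hmem (List.mem_toFinset.1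
      (hS.mem_of_forall e he fun f hf => hef f (List.mem_toFinset.1 hf)))

theorem IsMaximalNonoverlapping.maxAlmostRigid_FRep {S : Finset (ℕ × ℕ)}
    (hS : IsMaximalNonoverlapping n ε S) : MaxAlmostRigid (FRep k n ε S) :=
  (maxAlmostRigid_dsumList_iff fun e he => hS.subset e (Finset.mem_toList.1 he)).2
    ⟨S.nodup_toList, S.toList_toFinset.symm ▸ hS⟩

theorem subset_of_FRep_iso {S S' : Finset (ℕ × ℕ)} (hS : ∀ e ∈ S, ValidPair n e)
    (hS' : ∀ e ∈ S', ValidPair n e) (h : (FRep k n ε S).Iso (FRep k n ε S')) : S ⊆ S' := by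
  intro e he
  have hret : (chordRep k n ε e).IsRetract (FRep k n ε S) :=
    isRetract_dsumList_of_mem (List.mem_map_of_mem (Finset.mem_toList.2 he))
  exact Finset.mem_toList.1 ((isRetract_dsumList_iff_mem
    (fun f hf => hS' f (Finset.mem_toList.1 hf)) (hS e he)).1 (hret.trans h.isRetract))

namespace ARep

theorem dsum_left_comm (A B C : ARep k n ε) : (A.dsum (B.dsum C)).Iso (B.dsum (A.dsum C)) :=
  let swap (A B C : ARep k n ε) : (A.dsum (B.dsum C)).Hom (B.dsum (A.dsum C)) :=
    ((Hom.fst B C).comp (Hom.snd A _)).pair ((Hom.id A).map (Hom.snd B C))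
  ⟨swap A B C, (swap A B C).bijective_of_inverse (swap B A C) (fun _ _ => rfl) fun _ _ => rfl⟩

theorem iso_dsumList_of_perm {L L' : List (ARep k n ε)} (h : L.Perm L') :
    (dsumList k n ε L).Iso (dsumList k n ε L') := by
  induction h with
  | nil => exact Iso.refl _
  | cons A _ ih => exact (Iso.refl A).dsum ih
  | swap A B L => exact dsum_left_comm B A _
  | trans _ _ ih₁ ih₂ => exact ih₁.trans ih₂

end ARep

theorem MaxAlmostRigid.exists_iso_FRep {T : ARep k n ε} (hT : MaxAlmostRigid T) :
    ∃ S, IsMaximalNonoverlapping n ε S ∧ T.Iso (FRep k n ε S) := by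
  obtain ⟨L, hL, hTL⟩ := exists_iso_dsumList T
  obtain ⟨hnodup, hS⟩ := (maxAlmostRigid_dsumList_iff hL).1 (hT.congr hTL)
  exact ⟨L.toFinset, hS,
    hTL.trans (iso_dsumList_of_perm ((List.toFinset_toList hnodup).symm.map _))⟩

theorem exists_list_isMaximalNonoverlapping (n : ℕ) (ε : ℕ → Bool) :
    ∃ L : List (Finset (ℕ × ℕ)), L.Nodup ∧ L.length = catalan (n + 1) ∧
      ∀ S, S ∈ L ↔ IsMaximalNonoverlapping n ε S := by
  have hcard := encard_isMaximalNonoverlapping n ε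
  have hfin := Set.finite_of_encard_eq_coe hcard
  refine ⟨hfin.toFinset.toList, Finset.nodup_toList _, ?_, fun S => ?_⟩
  · rw [Finset.length_toList]
    rwa [hfin.encard_eq_coe_toFinset_card, Nat.cast_inj] at hcard
  · rw [Finset.mem_toList, Set.Finite.mem_toFinset, Set.mem_ofPred_eq]

end MaxAlmostRigid

/-- the number of isomorphism classes of maximal almost rigid
representations of `Q` is the Catalan number `C(2n+2, n+1)/(n+2)`. -/
theorem stmt_11 (k : Type) [Field k] (n : ℕ) (ε : ℕ → Bool) :
    ∃ L : List (ARep k n ε), L.length = (2 * n + 2).choose (n + 1) / (n + 2) ∧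
      (∀ M ∈ L, MaxAlmostRigid M) ∧ (L.Pairwise fun A B => ¬A.Iso B) ∧
      ∀ T : ARep k n ε, MaxAlmostRigid T → ∃ M ∈ L, T.Iso M := by
  obtain ⟨L, hnodup, hlength, hL⟩ := exists_list_isMaximalNonoverlapping n ε
  refine ⟨L.map (FRep k n ε), ?_, List.forall_mem_map.2 fun S hS => ?_, ?_, fun T hT => ?_⟩
  · rw [List.length_map, hlength, catalan_eq_centralBinom_div, Nat.centralBinom, mul_add, mul_one]
  · exact ((hL S).1 hS).maxAlmostRigid_FRep
  · refine List.pairwise_map.2 (hnodup.imp_of_mem fun {S S'} hS hS' hne hiso => hne ?_)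
    have hvalid := ((hL S).1 hS).subset
    have hvalid' := ((hL S').1 hS').subset
    exact (subset_of_FRep_iso hvalid hvalid' hiso).antisymm
      (subset_of_FRep_iso hvalid' hvalid hiso.symm)
  · obtain ⟨S, hS, hTS⟩ := hT.exists_iso_FRep
    exact ⟨_, List.mem_map_of_mem ((hL S).2 hS), hTS⟩

end CambrianA
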